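/- Let n ≥ 8 and let Γ be a finite index subgroup of Out(F_n) that contains the Torelli group 𝒯_n. Then any orientation preserving C^1 action of Γ on the circle cannot be faithful; that is, every group homomorphism Γ → Diff^1_+(S^1) has nontrivial kernel. -/

import Mathlib

noncomputable section

open MeasureTheory

/-- The circle `S¹ = ℝ/ℤ`. -/
abbrev 𝕊 : Type := AddCircle (1 : ℝ)

/-- `F : ℝ → ℝ` is a lift of the circle bijection `f` witnessing that `f` is an
orientation preserving homeomorphism of the circle: `F` is a strictly increasing
homeomorphism of `ℝ` (equivalently, continuous and strictly increasing) satisfying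
`F (x + 1) = F x + 1`, and projecting to `f`. -/
def IsOPLift (f : Equiv.Perm 𝕊) (F : ℝ → ℝ) : Prop :=
  Continuous F ∧ StrictMono F ∧ (∀ x : ℝ, F (x + 1) = F x + 1) ∧
    ∀ x : ℝ, f (x : 𝕊) = (F x : 𝕊)

/-- `f` is an orientation preserving homeomorphism of the circle. -/
def IsOPHomeo (f : Equiv.Perm 𝕊) : Prop := ∃ F : ℝ → ℝ, IsOPLift f F

/-- `F` is a lift witnessing that `f` is an orientation preserving `C¹` diffeomorphism
of the circle: an orientation preserving lift which is `C¹` with nowhere vanishing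
derivative. -/
def IsC1Lift (f : Equiv.Perm 𝕊) (F : ℝ → ℝ) : Prop :=
  IsOPLift f F ∧ ContDiff ℝ 1 F ∧ ∀ x : ℝ, deriv F x ≠ 0

/-- `f` is an orientation preserving `C¹` diffeomorphism of the circle, i.e. an element
of `Diff¹₊(S¹)`. -/
def IsC1Diffeo (f : Equiv.Perm 𝕊) : Prop := ∃ F : ℝ → ℝ, IsC1Lift f F

/-- The free group of rank `n`. -/
abbrev FreeGrp (n : ℕ) : Type := FreeGroup (Fin n)

/-- The automorphism group `Aut(Fₙ)`. -/
abbrev AutF (n : ℕ) : Type := MulAut (FreeGrp n)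

/-- The subgroup `IAₙ ≤ Aut(Fₙ)` of automorphisms acting trivially on the abelianization
`Fₙ^{ab} ≅ ℤⁿ`, i.e. the kernel of the natural map `Aut(Fₙ) → Aut(ℤⁿ)`. -/
def IA (n : ℕ) : Subgroup (AutF n) where
  carrier := {e | ∀ x : FreeGrp n, Abelianization.of (e x) = Abelianization.of x}
  one_mem' := fun _ => rfl
  mul_mem' := by
    intro a b ha hb x
    have h : (a * b) x = a (b x) := rfl
    rw [h, ha (b x), hb x]
  inv_mem' := by
    intro a ha x
    have h := ha (a⁻¹ x)
    have h' : a (a⁻¹ x) = x := a.apply_symm_apply x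
    rw [h'] at h
    exact h.symm

/-- The subgroup of inner automorphisms of `Fₙ`. -/
def InnF (n : ℕ) : Subgroup (AutF n) := (MulAut.conj : FreeGrp n →* AutF n).range

instance (n : ℕ) : (InnF n).Normal := by
  constructor
  rintro _ ⟨g, rfl⟩ e
  refine ⟨e g, ?_⟩
  ext x
  simp [MulAut.conj_apply, MulAut.mul_apply, MulAut.inv_def, map_mul, map_inv]

/-- The outer automorphism group `Out(Fₙ) = Aut(Fₙ)/Inn(Fₙ)`. -/
def OutF (n : ℕ) : Type := AutF n ⧸ InnF n

instance (n : ℕ) : Group (OutF n) := QuotientGroup.Quotient.group (InnF n)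

/-- The Torelli subgroup `𝒯ₙ ≤ Out(Fₙ)`: the subgroup of outer automorphisms acting
trivially on the abelianization `Fₙ^{ab} ≅ ℤⁿ`, i.e. the kernel of the induced map
`Out(Fₙ) → Aut(ℤⁿ)`.  Since inner automorphisms act trivially on the abelianization,
this kernel is exactly the image of `IAₙ` in `Out(Fₙ)`. -/
def Torelli (n : ℕ) : Subgroup (OutF n) :=
  (IA n).map (QuotientGroup.mk' (InnF n))


/-! ### Module 1 : hyperbolic fixed point from ping-pong -/
namespace HypPt

def W (f : Bool → ℝ → ℝ) : List Bool → ℝ → ℝ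
  | [] => fun x => x
  | b :: w => fun x => f b (W f w x)

def wsum : ℕ → (List Bool → ℝ) → ℝ
  | 0, g => g []
  | N + 1, g => wsum N (fun w => g (true :: w)) + wsum N (fun w => g (false :: w))

lemma wsum_add (N : ℕ) : ∀ g h : List Bool → ℝ, wsum N (fun w => g w + h w) = wsum N g + wsum N h := by
  induction N with
  | zero => intro g h; rfl
  | succ N ih => intro g h; simp only [wsum, ih]; ring

lemma wsum_mul (N : ℕ) (k : ℝ) : ∀ g : List Bool → ℝ, wsum N (fun w => k * g w) = k * wsum N g := by
  induction N with
  | zero => intro g; rfl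
  | succ N ih => intro g; simp only [wsum, ih]; ring

lemma wsum_const (N : ℕ) (k : ℝ) : wsum N (fun _ => k) = 2 ^ N * k := by
  induction N with
  | zero => simp [wsum]
  | succ N ih => simp only [wsum, ih]; ring

lemma wsum_mono (N : ℕ) : ∀ g h : List Bool → ℝ, (∀ w, g w ≤ h w) → wsum N g ≤ wsum N h := by
  induction N with
  | zero => intro g h H; exact H _
  | succ N ih => intro g h H; exact add_le_add (ih _ _ fun w => H _) (ih _ _ fun w => H _)

lemma exists_neg (N : ℕ) (g : List Bool → ℝ) (h : wsum N g < 0) : ∃ w, g w < 0 := by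
  by_contra! H
  have := wsum_mono N (fun _ => 0) g H
  rw [wsum_const] at this
  linarith

variable {f : Bool → ℝ → ℝ} {a c : ℝ}

lemma W_mono (hm : ∀ b, StrictMono (f b)) : ∀ w, StrictMono (W f w)
  | [] => strictMono_id
  | b :: w => (hm b).comp (W_mono hm w)

lemma W_mem (hm : ∀ b, StrictMono (f b)) (ha : ∀ b, a ≤ f b a) (hc : ∀ b, f b c ≤ c) :
    ∀ w x, x ∈ Set.Icc a c → W f w x ∈ Set.Icc a c
  | [], x, hx => hx
  | b :: w, x, hx => by
    have h := W_mem hm ha hc w x hx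
    exact ⟨(ha b).trans ((hm b).monotone h.1), ((hm b).monotone h.2).trans (hc b)⟩

lemma sum_len (ha : ∀ b, a ≤ f b a) (hc : ∀ b, f b c ≤ c) (hm : ∀ b, StrictMono (f b))
    (hd : f true c ≤ f false a) (N : ℕ) :
    ∀ u : ℝ → ℝ, Monotone u → wsum N (fun w => u (W f w c) - u (W f w a)) ≤ u c - u a := by
  induction N with
  | zero => intro u hu; exact le_rfl
  | succ N ih =>
    intro u hu
    have h1 := ih (fun x => u (f true x)) (hu.comp (hm true).monotone)
    have h2 := ih (fun x => u (f false x)) (hu.comp (hm false).monotone)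
    have h3 := hu hd
    have h4 := hu (ha true)
    have h5 := hu (hc false)
    simp only [wsum, W] at *
    linarith

def E (f : Bool → ℝ → ℝ) (a c C : ℝ) : List Bool → ℝ
  | [] => 0
  | _ :: w => E f a c C w + 1/2 + C * (W f w c - W f w a)

lemma W_deriv (hC : ∀ b, ContDiff ℝ 1 (f b)) (hp : ∀ b x, 0 < deriv (f b) x) :
    ∀ w x, 0 < deriv (W f w) x ∧ DifferentiableAt ℝ (W f w) x ∧ (∀ b, deriv (W f (b :: w)) x = deriv (f b) (W f w x) * deriv (W f w) x) := by
  have key : ∀ w x, DifferentiableAt ℝ (W f w) x → (∀ b, HasDerivAt (W f (b :: w)) (deriv (f b) (W f w x) * deriv (W f w) x) x) := by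
    intro w x h b
    have h1 : HasDerivAt (f b) (deriv (f b) (W f w x)) (W f w x) :=
      (((hC b).differentiable (by norm_num)) _).hasDerivAt
    exact h1.comp x h.hasDerivAt
  intro w
  induction w with
  | nil =>
    intro x
    have hd : DifferentiableAt ℝ (W f []) x := differentiableAt_id
    refine ⟨?_, hd, fun b => (key [] x hd b).deriv⟩
    have : deriv (W f []) x = 1 := by simp [W]
    rw [this]; norm_num
  | cons b w ih =>
    intro x
    have h1 := key w x (ih x).2.1 b
    refine ⟨?_, h1.differentiableAt, fun b' => (key _ x h1.differentiableAt b').deriv⟩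
    rw [h1.deriv]
    exact mul_pos (hp b _) (ih x).1

lemma distort (hC : ∀ b, ContDiff ℝ 1 (f b)) (hp : ∀ b x, 0 < deriv (f b) x) :
    ∃ C : ℝ, 0 ≤ C ∧ ∀ b, ∀ x ∈ Set.Icc a c, ∀ y ∈ Set.Icc a c,
      Real.log (deriv (f b) x) - Real.log (deriv (f b) y) ≤ 1/2 + C * |x - y| := by
  have one : ∀ b, ∃ C : ℝ, 0 ≤ C ∧ ∀ x ∈ Set.Icc a c, ∀ y ∈ Set.Icc a c,
      Real.log (deriv (f b) x) - Real.log (deriv (f b) y) ≤ 1/2 + C * |x - y| := by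
    intro b
    have hcont : Continuous (fun x => Real.log (deriv (f b) x)) :=
      ((hC b).continuous_deriv (by norm_num)).log (fun x => (hp b x).ne')
    have hu := isCompact_Icc.uniformContinuousOn_of_continuous (s := Set.Icc a c) hcont.continuousOn
    rw [Metric.uniformContinuousOn_iff] at hu
    obtain ⟨δ, hδ, hu⟩ := hu (1/2) (by norm_num)
    obtain ⟨D, hD⟩ := isCompact_Icc.exists_bound_of_continuousOn (s := Set.Icc a c) hcont.continuousOn
    refine ⟨2 * |D| / δ, by positivity, fun x hx y hy => ?_⟩
    by_cases hxy : |x - y| < δ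
    · have := hu x hx y hy (by rwa [Real.dist_eq])
      rw [Real.dist_eq] at this
      have h2 := (abs_lt.1 this).2
      have : 0 ≤ 2 * |D| / δ * |x - y| := by positivity
      linarith
    · push Not at hxy
      have h1 := hD x hx
      have h2 := hD y hy
      rw [Real.norm_eq_abs] at h1 h2
      have h3 := (abs_le.1 h1).2
      have h4 := (abs_le.1 h2).1
      have h5 : 2 * |D| ≤ 2 * |D| / δ * |x - y| := by
        rw [div_mul_eq_mul_div, le_div_iff₀ hδ]
        gcongr
      have := le_abs_self D
      linarith
  obtain ⟨C1, h1, H1⟩ := one true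
  obtain ⟨C2, h2, H2⟩ := one false
  refine ⟨C1 + C2, by positivity, ?_⟩
  rintro (_ | _) x hx y hy
  · have := H2 x hx y hy
    nlinarith [abs_nonneg (x - y), mul_nonneg h1 (abs_nonneg (x - y))]
  · have := H1 x hx y hy
    nlinarith [abs_nonneg (x - y), mul_nonneg h2 (abs_nonneg (x - y))]

theorem main (hac : a < c) (hC : ∀ b, ContDiff ℝ 1 (f b)) (hp : ∀ b x, 0 < deriv (f b) x)
    (ha : ∀ b, a ≤ f b a) (hc : ∀ b, f b c ≤ c) (hd : f true c ≤ f false a) :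
    ∃ w, ∃ x, W f w x = x ∧ deriv (W f w) x < 1 := by
  have hm : ∀ b, StrictMono (f b) := fun b => strictMono_of_deriv_pos (hp b)
  obtain ⟨C, hC0, hCd⟩ := distort (a := a) (c := c) hC hp
  have hWd := W_deriv hC hp
  have hlpos : ∀ w, 0 < W f w c - W f w a := fun w => sub_pos.2 (W_mono hm w hac)
  have hI : 0 < c - a := sub_pos.2 hac
  -- derivative estimate
  have hest : ∀ w, ∀ x ∈ Set.Icc a c, Real.log (deriv (W f w) x) ≤
      Real.log ((W f w c - W f w a) / (c - a)) + E f a c C w := by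
    intro w
    induction w with
    | nil =>
      intro x hx
      have : deriv (W f []) x = 1 := by simp [W]
      rw [this]
      simp [W, E, div_self hI.ne']
    | cons s w ih =>
      intro x hx
      rw [(hWd w x).2.2 s, Real.log_mul (hp s _).ne' (hWd w x).1.ne']
      have hlt : W f w a < W f w c := W_mono hm w hac
      obtain ⟨ξ, hξ, hξe⟩ := exists_deriv_eq_slope (f s) hlt
        ((hC s).continuous.continuousOn) (((hC s).differentiable (by norm_num)).differentiableOn)
      have hwa := W_mem hm ha hc w a (Set.left_mem_Icc.2 hac.le)
      have hwc := W_mem hm ha hc w c (Set.right_mem_Icc.2 hac.le)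
      have hwx := W_mem hm ha hc w x hx
      have hξI : ξ ∈ Set.Icc a c := ⟨hwa.1.trans hξ.1.le, hξ.2.le.trans hwc.2⟩
      have h1 := hCd s _ hwx ξ hξI
      have h2 : |W f w x - ξ| ≤ W f w c - W f w a := by
        have e1 := (W_mono hm w).monotone hx.1
        have e2 := (W_mono hm w).monotone hx.2
        rw [abs_le]; constructor <;> linarith [hξ.1, hξ.2]
      have h3 := mul_le_mul_of_nonneg_left h2 hC0
      have h4 : (W f (s :: w) c - W f (s :: w) a) / (c - a) =
          deriv (f s) ξ * ((W f w c - W f w a) / (c - a)) := by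
        rw [hξe]
        simp only [W]
        field_simp [(hlpos w).ne']
      rw [h4, Real.log_mul (hp s _).ne' (div_pos (hlpos w) hI).ne']
      have := ih x hx
      simp only [E]
      linarith
  have hsum : ∀ N, wsum N (fun w => W f w c - W f w a) ≤ c - a :=
    fun N => sum_len ha hc hm hd N id monotone_id
  have hE : ∀ N : ℕ, wsum N (E f a c C) ≤ 2 ^ N * (N * (1/2) + 2 * C * (c - a)) - 2 * C * (c - a) := by
    intro N
    induction N with
    | zero => simp [wsum, E]
    | succ N ih =>
      have h1 : wsum (N+1) (E f a c C) = 2 * (wsum N (E f a c C) + 2 ^ N * (1/2) + C * wsum N (fun w => W f w c - W f w a)) := by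
        simp only [wsum, E]
        rw [wsum_add, wsum_add, wsum_const, wsum_mul]; ring
      rw [h1]
      have h2 := mul_le_mul_of_nonneg_left (hsum N) hC0
      push_cast
      rw [pow_succ]
      linarith
  obtain ⟨N, hN⟩ := exists_nat_gt (2 * C * (c - a) / (1/10))
  have hN' : 2 * C * (c - a) < N * (1/10) := by rwa [div_lt_iff₀ (by norm_num)] at hN
  have hlog2 : (0.6:ℝ) < Real.log 2 := by have := Real.log_two_gt_d9; linarith
  have hfin : wsum N (fun w => Real.log ((W f w c - W f w a) / (c - a)) + E f a c C w) < 0 := by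
    rw [wsum_add]
    have h1 : wsum N (fun w => Real.log ((W f w c - W f w a) / (c - a))) ≤
        wsum N (fun w => (2 ^ N / (c - a)) * (W f w c - W f w a) + (-1 - N * Real.log 2)) := by
      apply wsum_mono
      intro w
      have hy : 0 < (W f w c - W f w a) / (c - a) := div_pos (hlpos w) hI
      have := Real.log_le_sub_one_of_pos (mul_pos (pow_pos (by norm_num : (0:ℝ) < 2) N) hy)
      rw [Real.log_mul (by positivity) hy.ne', Real.log_pow] at this
      have e : (2:ℝ) ^ N / (c - a) * (W f w c - W f w a) = 2 ^ N * ((W f w c - W f w a) / (c - a)) := by ring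
      rw [e]; linarith
    rw [wsum_add, wsum_mul, wsum_const] at h1
    have h2 : (2:ℝ) ^ N / (c - a) * wsum N (fun w => W f w c - W f w a) ≤ 2 ^ N := by
      have := mul_le_mul_of_nonneg_left (hsum N) (by positivity : 0 ≤ (2:ℝ) ^ N / (c - a))
      rwa [div_mul_cancel₀ _ hI.ne'] at this
    have h3 := hE N
    have hp2 : (0:ℝ) < 2 ^ N := by positivity
    have hN0 : (0:ℝ) ≤ N := Nat.cast_nonneg N
    have h4 : (N * (1/2) + 2 * C * (c - a)) - N * Real.log 2 < 0 := by nlinarith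
    have h5 := mul_neg_of_pos_of_neg hp2 h4
    have h6 : 0 ≤ 2 * C * (c - a) := by positivity
    nlinarith
  obtain ⟨w, hw⟩ := exists_neg N _ hfin
  have hcont : ContinuousOn (W f w) (Set.Icc a c) :=
    fun x _ => (hWd w x).2.1.continuousAt.continuousWithinAt
  obtain ⟨x, hx, hfx⟩ := exists_mem_Icc_isFixedPt_of_mapsTo hcont hac.le (fun x hx => W_mem hm ha hc w x hx)
  refine ⟨w, x, hfx, ?_⟩
  have := (hest w x hx).trans_lt hw
  rwa [Real.log_neg_iff (hWd w x).1] at this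

end HypPt
/-! ### Module 2 : commuting actions -/
structure GoodAct {𝓖 : Type*} [Group 𝓖] (A : 𝓖 →* Equiv.Perm ℝ) : Prop where
  mono : ∀ g, StrictMono (A g)
  per : ∀ g x, A g (x + 1) = A g x + 1
  c1 : ∀ g, ContDiff ℝ 1 (A g)
  pos : ∀ g x, 0 < deriv (A g) x

namespace GoodAct
variable {𝓖 : Type*} [Group 𝓖] {A : 𝓖 →* Equiv.Perm ℝ}

lemma mul_ap (g h : 𝓖) (x : ℝ) : A (g * h) x = A g (A h x) := by
  rw [map_mul]; rfl

lemma inv_ap (g : 𝓖) (x : ℝ) : A g⁻¹ (A g x) = x := by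
  rw [← mul_ap, inv_mul_cancel, map_one]; rfl

lemma ap_inv (g : 𝓖) (x : ℝ) : A g (A g⁻¹ x) = x := by
  rw [← mul_ap, mul_inv_cancel, map_one]; rfl

lemma per_int (hA : GoodAct A) (g : 𝓖) (x : ℝ) (k : ℤ) : A g (x + k) = A g x + k := by
  induction k with
  | zero => simp
  | succ k ih => push_cast at *; rw [← add_assoc, hA.per, ih]; ring
  | pred k ih =>
    have := hA.per g (x + ((-(k:ℤ) - 1 : ℤ) : ℝ))
    push_cast at *
    have e : x + (-(k:ℝ) - 1) + 1 = x + -k := by ring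
    rw [e, ih] at this
    linarith

lemma cont (hA : GoodAct A) (g : 𝓖) : Continuous (A g) := (hA.c1 g).continuous

/-- Fixed set of a subgroup. -/
def FixS (A : 𝓖 →* Equiv.Perm ℝ) (B : Subgroup 𝓖) : Set ℝ := {x | ∀ g ∈ B, A g x = x}

lemma isClosed_fix (hA : GoodAct A) (g : 𝓖) : IsClosed {x | A g x = x} :=
  isClosed_eq (hA.cont g) continuous_id

lemma isClosed_FixS (hA : GoodAct A) (B : Subgroup 𝓖) : IsClosed (FixS A B) := by
  have : FixS A B = ⋂ g ∈ B, {x | A g x = x} := by ext; simp [FixS]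
  rw [this]
  exact isClosed_biInter fun g _ => hA.isClosed_fix g

lemma FixS_per (hA : GoodAct A) {B : Subgroup 𝓖} {x : ℝ} (hx : x ∈ FixS A B) (k : ℤ) :
    x + k ∈ FixS A B := fun g hg => by rw [hA.per_int, hx g hg]

/-- An element with a fixed point cannot move any point by a nonzero integer. -/
lemma disp_zero (hA : GoodAct A) {g : 𝓖} {x z : ℝ} (hx : A g x = x) {k : ℤ} (hz : A g z = z + k) :
    k = 0 := by
  rcases lt_trichotomy k 0 with hk | hk | hk
  · exfalso
    have hk' : (k : ℝ) ≤ -1 := by exact_mod_cast Int.le_sub_one_of_lt hk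
    have hf := Int.floor_le (z - x)
    have hf2 := Int.lt_floor_add_one (z - x)
    have h1 : A g (x + ⌊z - x⌋) = x + ⌊z - x⌋ := by rw [hA.per_int, hx]
    have h2 : A g (x + ⌊z - x⌋) ≤ A g z := (hA.mono g).monotone (by linarith)
    linarith
  · exact hk
  · exfalso
    have hk' : (1 : ℝ) ≤ k := by exact_mod_cast hk
    have hf := Int.le_ceil (z - x)
    have hf2 := Int.ceil_lt_add_one (z - x)
    have h1 : A g (x + ⌈z - x⌉) = x + ⌈z - x⌉ := by rw [hA.per_int, hx]
    have h2 : A g z ≤ A g (x + ⌈z - x⌉) := (hA.mono g).monotone (by linarith)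
    linarith

lemma pingpong (hA : GoodAct A) (B1 B2 : Subgroup 𝓖) {a0 c0 : ℝ} (ha0 : a0 ∈ FixS A B1)
    (hc0 : c0 ∈ FixS A B2) (hdis : ∀ x, x ∈ FixS A B1 → x ∉ FixS A B2) :
    ∃ w ∈ B1 ⊔ B2, ∃ x, A w x = x ∧ deriv (A w) x < 1 := by
  -- c
  obtain ⟨c1, hc1, hac1⟩ : ∃ c1 ∈ FixS A B2, a0 ≤ c1 :=
    ⟨c0 + ⌈a0 - c0⌉, hA.FixS_per hc0 _, by have := Int.le_ceil (a0 - c0); linarith⟩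
  set S2 := FixS A B2 ∩ Set.Ici a0 with hS2
  have hS2c : IsClosed S2 := (hA.isClosed_FixS B2).inter isClosed_Ici
  have hS2b : BddBelow S2 := ⟨a0, fun x hx => hx.2⟩
  set c := sInf S2 with hc
  have hcm : c ∈ S2 := hS2c.csInf_mem ⟨c1, hc1, hac1⟩ hS2b
  set S1 := FixS A B1 ∩ Set.Iic c with hS1
  have hS1c : IsClosed S1 := (hA.isClosed_FixS B1).inter isClosed_Iic
  have hS1b : BddAbove S1 := ⟨c, fun x hx => hx.2⟩
  set a := sSup S1 with ha
  have ham : a ∈ S1 := hS1c.csSup_mem ⟨a0, ha0, hcm.2⟩ hS1b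
  have ha0a : a0 ≤ a := le_csSup hS1b ⟨ha0, hcm.2⟩
  have hac : a < c := lt_of_le_of_ne ham.2 (fun h => hdis a ham.1 (h ▸ hcm.1))
  -- u
  obtain ⟨u, hu, huc⟩ : ∃ u ∈ B1, A u c < (a + c) / 2 := by
    by_contra! H
    set S := (fun g => A g c) '' (B1 : Set 𝓖)
    have hSne : S.Nonempty := ⟨_, ⟨1, B1.one_mem, rfl⟩⟩
    have hSb : BddBelow S := ⟨(a + c) / 2, by rintro _ ⟨g, hg, rfl⟩; exact H g hg⟩
    have hle : ∀ g ∈ B1, A g (sInf S) ≤ sInf S := by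
      intro g hg
      apply le_csInf hSne
      rintro _ ⟨b, hb, rfl⟩
      have h1 : sInf S ≤ A (g⁻¹ * b) c := csInf_le hSb ⟨_, B1.mul_mem (B1.inv_mem hg) hb, rfl⟩
      have h2 := (hA.mono g).monotone h1
      rwa [mul_ap, ap_inv] at h2
    have hfix : sInf S ∈ FixS A B1 := by
      intro g hg
      refine le_antisymm (hle g hg) ?_
      have := (hA.mono g).monotone (hle g⁻¹ (B1.inv_mem hg))
      rwa [ap_inv] at this
    have hSc : sInf S ≤ c := csInf_le hSb ⟨1, B1.one_mem, by simp⟩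
    have h1 : sInf S ≤ a := le_csSup hS1b ⟨hfix, hSc⟩
    have h2 : (a + c) / 2 ≤ sInf S := le_csInf hSne (by rintro _ ⟨g, hg, rfl⟩; exact H g hg)
    linarith
  obtain ⟨v, hv, hva⟩ : ∃ v ∈ B2, (a + c) / 2 < A v a := by
    by_contra! H
    set S := (fun g => A g a) '' (B2 : Set 𝓖)
    have hSne : S.Nonempty := ⟨_, ⟨1, B2.one_mem, rfl⟩⟩
    have hSb : BddAbove S := ⟨(a + c) / 2, by rintro _ ⟨g, hg, rfl⟩; exact H g hg⟩
    have hle : ∀ g ∈ B2, sSup S ≤ A g (sSup S) := by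
      intro g hg
      apply csSup_le hSne
      rintro _ ⟨b, hb, rfl⟩
      have h1 : A (g⁻¹ * b) a ≤ sSup S := le_csSup hSb ⟨_, B2.mul_mem (B2.inv_mem hg) hb, rfl⟩
      have h2 := (hA.mono g).monotone h1
      rwa [mul_ap, ap_inv] at h2
    have hfix : sSup S ∈ FixS A B2 := by
      intro g hg
      refine le_antisymm ?_ (hle g hg)
      have := (hA.mono g).monotone (hle g⁻¹ (B2.inv_mem hg))
      rwa [ap_inv] at this
    have hSc : a ≤ sSup S := le_csSup hSb ⟨1, B2.one_mem, by simp⟩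
    have h1 : c ≤ sSup S := csInf_le hS2b ⟨hfix, ha0a.trans hSc⟩
    have h2 : sSup S ≤ (a + c) / 2 := csSup_le hSne (by rintro _ ⟨g, hg, rfl⟩; exact H g hg)
    linarith
  let e : Bool → 𝓖 := fun b => if b then u else v
  have hua : A u a = a := ham.1 u hu
  have hvc : A v c = c := hcm.1 v hv
  obtain ⟨w, x, hwx, hwd⟩ := HypPt.main (f := fun b => A (e b)) hac (fun b => hA.c1 _) (fun b => hA.pos _)
    (by rintro (_ | _)
        · simp only [e]; simp; linarith
        · simp only [e]; simp [hua])
    (by rintro (_ | _)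
        · simp only [e]; simp [hvc]
        · simp only [e]; simp; linarith)
    (by simp only [e]; simp; linarith)
  have hW : ∀ w, HypPt.W (fun b => A (e b)) w = A ((w.map e).prod) := by
    intro w
    induction w with
    | nil => ext x; simp [HypPt.W]
    | cons b w ih => ext x; simp only [HypPt.W, ih, List.map_cons, List.prod_cons, mul_ap]
  rw [hW] at hwx hwd
  refine ⟨_, ?_, x, hwx, hwd⟩
  apply Subgroup.list_prod_mem
  intro y hy
  rw [List.mem_map] at hy
  obtain ⟨b, _, rfl⟩ := hy
  rcases b with _ | _
  · exact (le_sup_right : B2 ≤ B1 ⊔ B2) (by simpa [e] using hv)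
  · exact (le_sup_left : B1 ≤ B1 ⊔ B2) (by simpa [e] using hu)

lemma mem_FixS_closure {s : Set 𝓖} {x : ℝ} (h : ∀ g ∈ s, A g x = x) : x ∈ FixS A (Subgroup.closure s) := by
  intro g hg
  induction hg using Subgroup.closure_induction with
  | mem y hy => exact h y hy
  | one => simp
  | mul y z _ _ h1 h2 => rw [mul_ap, h2, h1]
  | inv y _ h1 => conv_lhs => rw [← h1]
                  rw [inv_ap]

/-- either elements with fixed points have a common fixed point, or there is a hyperbolic one -/
lemma common_or_hyp (hA : GoodAct A) (G : Subgroup 𝓖) :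
    (∃ x, ∀ g ∈ G, (∃ y, A g y = y) → A g x = x) ∨
    ∃ w ∈ G, ∃ x, A w x = x ∧ deriv (A w) x < 1 := by
  by_contra! ⟨H1, H2⟩
  have hfin : ∀ t : Finset 𝓖, (∀ g ∈ t, g ∈ G ∧ ∃ y, A g y = y) → ∃ x, ∀ g ∈ t, A g x = x := by
    classical
    intro t
    induction t using Finset.induction_on with
    | empty => intro _; exact ⟨0, by simp⟩
    | insert h t hh ih =>
      intro ht
      obtain ⟨x, hx⟩ := ih (fun g hg => ht g (Finset.mem_insert_of_mem hg))
      obtain ⟨hhG, y, hy⟩ := ht h (Finset.mem_insert_self _ _)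
      by_contra! hno
      obtain ⟨w, hw, z, hz, hz'⟩ := hA.pingpong (Subgroup.closure (t : Set 𝓖)) (Subgroup.closure {h})
        (a0 := x) (c0 := y) (mem_FixS_closure (fun g hg => hx g hg))
        (mem_FixS_closure (by simpa using hy))
        (by
          intro z h1 h2
          obtain ⟨g, hg, hgz⟩ := hno z
          rcases Finset.mem_insert.1 hg with rfl | hg
          · exact hgz (h2 _ (Subgroup.subset_closure rfl))
          · exact hgz (h1 _ (Subgroup.subset_closure hg)))
      have hle : Subgroup.closure (t : Set 𝓖) ⊔ Subgroup.closure {h} ≤ G := by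
        refine sup_le ?_ ?_
        · rw [Subgroup.closure_le]; intro g hg; exact (ht g (Finset.mem_insert_of_mem hg)).1
        · rw [Subgroup.closure_le]; rintro _ rfl; exact hhG
      exact absurd hz' (not_lt.2 (H2 w (hle hw) z hz))
  let ι := {g : 𝓖 // g ∈ G ∧ ∃ y, A g y = y}
  have hne := isCompact_Icc (a := (0:ℝ)) (b := 1)
  obtain ⟨t, ht⟩ := hne.elim_finite_subfamily_closed (fun i : ι => {x | A i.1 x = x})
    (fun i => hA.isClosed_fix i.1) (by
      ext x
      simp only [Set.mem_inter_iff, Set.mem_iInter, Set.mem_ofPred_eq, Set.mem_empty_iff_false, iff_false]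
      rintro ⟨_, h⟩
      obtain ⟨g, hg, hg2, hg3⟩ := H1 x
      exact hg3 (h ⟨g, hg, hg2⟩))
  classical
  obtain ⟨x, hx⟩ := hfin (t.image Subtype.val) (by
    intro g hg
    obtain ⟨i, _, rfl⟩ := Finset.mem_image.1 hg
    exact i.2)
  have : x + ((-⌊x⌋ : ℤ) : ℝ) ∈ Set.Icc (0:ℝ) 1 ∩ ⋂ i ∈ t, {x | A i.1 x = x} := by
    refine ⟨⟨?_, ?_⟩, ?_⟩
    · push_cast; linarith [Int.floor_le x]
    · push_cast; linarith [Int.lt_floor_add_one x]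
    · simp only [Set.mem_iInter, Set.mem_ofPred_eq]
      intro i hi
      rw [hA.per_int, hx i.1 (Finset.mem_image_of_mem _ hi)]
  rw [ht] at this
  exact this

lemma hyp_commute_aux (hA : GoodAct A) {w h : 𝓖} {x0 y : ℝ} (hw : A w x0 = x0) (hd : deriv (A w) x0 < 1)
    (hc : ∀ x, A w (A h x) = A h (A w x)) (hy : A h y = y) : ¬ x0 < A h x0 := by
  intro hlt
  set xs : ℕ → ℝ := fun n => (A h)^[n] x0 with hxs
  have hsucc : ∀ n, xs (n+1) = A h (xs n) := fun n => Function.iterate_succ_apply' _ _ _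
  have hinc : StrictMono xs := by
    apply strictMono_nat_of_lt_succ
    intro n
    induction n with
    | zero => simpa [hxs] using hlt
    | succ n ih => rw [hsucc (n+1), hsucc n]; exact hA.mono h (by rw [← hsucc]; exact ih)
  obtain ⟨y', hy', hxy'⟩ : ∃ y', A h y' = y' ∧ x0 ≤ y' :=
    ⟨y + ⌈x0 - y⌉, by rw [hA.per_int, hy], by have := Int.le_ceil (x0 - y); linarith⟩
  have hbd : BddAbove (Set.range xs) := by
    refine ⟨y', ?_⟩
    rintro _ ⟨n, rfl⟩
    induction n with
    | zero => exact hxy'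
    | succ n ih => rw [hsucc, ← hy']; exact (hA.mono h).monotone ih
  have hL := tendsto_atTop_ciSup hinc.monotone hbd
  set L := ⨆ i, xs i
  have hfix : ∀ n, A w (xs n) = xs n := by
    intro n
    induction n with
    | zero => exact hw
    | succ n ih => rw [hsucc, hc, ih]
  have hder : ∀ n, deriv (A w) (xs n) = deriv (A w) x0 := by
    intro n
    induction n with
    | zero => rfl
    | succ n ih =>
      have hdw : ∀ x, HasDerivAt (A w) (deriv (A w) x) x := fun x => (((hA.c1 w).differentiable (by norm_num)) x).hasDerivAt
      have hdh : ∀ x, HasDerivAt (A h) (deriv (A h) x) x := fun x => (((hA.c1 h).differentiable (by norm_num)) x).hasDerivAt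
      have e1 := (hdw (A h (xs n))).comp (xs n) (hdh (xs n))
      have e2 := (hdh (A w (xs n))).comp (xs n) (hdw (xs n))
      have e3 : (A w) ∘ (A h) = (A h) ∘ (A w) := funext hc
      rw [e3] at e1
      have := e1.unique e2
      rw [hfix n, mul_comm] at this
      rw [hsucc, ← ih]
      exact mul_left_cancel₀ (hA.pos h _).ne' this
  have hrolle : ∀ n, ∃ ξ ∈ Set.Ioo (xs n) (xs (n+1)), deriv (A w) ξ = 1 := by
    intro n
    have hl := hinc (Nat.lt_succ_self n)
    obtain ⟨ξ, hξ, he⟩ := exists_deriv_eq_slope (A w) hl (hA.cont w).continuousOn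
      (((hA.c1 w).differentiable (by norm_num)).differentiableOn)
    refine ⟨ξ, hξ, ?_⟩
    rw [he, hfix, hfix, div_self (sub_pos.2 hl).ne']
  choose ξ hξ hξ1 using hrolle
  have hcd : Continuous (deriv (A w)) := (hA.c1 w).continuous_deriv (by norm_num)
  have hξL : Filter.Tendsto ξ Filter.atTop (nhds L) :=
    tendsto_of_tendsto_of_tendsto_of_le_of_le hL (hL.comp (Filter.tendsto_add_atTop_nat 1))
      (fun n => (hξ n).1.le) (fun n => (hξ n).2.le)
  have t1 := (hcd.tendsto L).comp hξL
  have t2 := (hcd.tendsto L).comp hL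
  have t1' : Filter.Tendsto (fun _ : ℕ => (1:ℝ)) Filter.atTop (nhds (deriv (A w) L)) := by
    refine t1.congr (fun n => ?_); exact hξ1 n
  have t2' : Filter.Tendsto (fun _ : ℕ => deriv (A w) x0) Filter.atTop (nhds (deriv (A w) L)) := by
    refine t2.congr (fun n => ?_); exact hder n
  have e1 := tendsto_nhds_unique t1' tendsto_const_nhds
  have e2 := tendsto_nhds_unique t2' tendsto_const_nhds
  linarith

theorem dyn1 (hA : GoodAct A) (G H : Subgroup 𝓖)
    (hcomm : ∀ g ∈ G, ∀ h ∈ H, ∃ k : ℤ, ∀ x, A g (A h x) = A h (A g x) + k) :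
    (∃ x, ∀ g ∈ G, (∃ y, A g y = y) → A g x = x) ∨ (∃ x, ∀ g ∈ H, (∃ y, A g y = y) → A g x = x) := by
  rcases hA.common_or_hyp G with h | ⟨w, hw, x, hwx, hwd⟩
  · exact Or.inl h
  right
  refine ⟨x, fun h hh ⟨y, hy⟩ => ?_⟩
  have hex : ∀ h ∈ H, ∀ z, A w (A h z) = A h (A w z) := by
    intro h hh z
    obtain ⟨k, hk⟩ := hcomm w hw h hh
    have h1 := hk x
    rw [hwx] at h1
    have := hA.disp_zero hwx h1
    rw [hk, this]; simp
  have h1 := hA.hyp_commute_aux hwx hwd (hex h hh) hy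
  have hy' : A h⁻¹ y = y := by
    conv_lhs => rw [← hy]
    rw [inv_ap]
  have h2 := hA.hyp_commute_aux hwx hwd (hex h⁻¹ (H.inv_mem hh)) hy'
  apply le_antisymm (not_lt.1 h1)
  have := (hA.mono h).monotone (not_lt.1 h2)
  rwa [ap_inv] at this

end GoodAct
/-! ### Module 3 : translation number is a homomorphism -/
namespace GoodAct
variable {𝓖 : Type*} [Group 𝓖] {A : 𝓖 →* Equiv.Perm ℝ}

def toDeg (hA : GoodAct A) (g : 𝓖) : CircleDeg1Lift :=
  ⟨⟨A g, (hA.mono g).monotone⟩, hA.per g⟩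

def tr (hA : GoodAct A) (g : 𝓖) : ℝ := (hA.toDeg g).translationNumber

lemma toDeg_ap (hA : GoodAct A) (g : 𝓖) (x : ℝ) : hA.toDeg g x = A g x := rfl

lemma tr_pow (hA : GoodAct A) (g : 𝓖) (n : ℕ) : hA.tr (g ^ n) = n * hA.tr g := by
  have : hA.toDeg (g ^ n) = hA.toDeg g ^ n := by
    induction n with
    | zero => ext x; simp [toDeg_ap]
    | succ n ih => ext x; rw [pow_succ, pow_succ, CircleDeg1Lift.mul_apply, ← ih, toDeg_ap, toDeg_ap, toDeg_ap, mul_ap]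
  rw [tr, this, CircleDeg1Lift.translationNumber_pow]; rfl

lemma tr_lt (hA : GoodAct A) (g : 𝓖) (x : ℝ) : A g x < x + hA.tr g + 1 :=
  (hA.toDeg g).map_lt_add_translationNumber_add_one x

lemma lt_tr (hA : GoodAct A) (g : 𝓖) (x : ℝ) : x + hA.tr g - 1 < A g x := by
  have h1 := (hA.toDeg g).translationNumber_le_ceil_sub x
  have h2 := Int.ceil_lt_add_one (hA.toDeg g x - x)
  rw [toDeg_ap] at *
  have : hA.tr g < A g x - x + 1 := h1.trans_lt h2
  linarith

lemma nonpos_of_nat_mul {t : ℝ} (h : ∀ n : ℕ, n * t < 3) : t ≤ 0 := by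
  by_contra! ht
  obtain ⟨n, hn⟩ := exists_nat_gt (3 / t)
  rw [div_lt_iff₀ ht] at hn
  linarith [h n]

lemma sign_const (hA : GoodAct A) {H : Subgroup 𝓖} {x0 : ℝ}
    (hx0 : ∀ g ∈ H, (∃ y, A g y = y) → A g x0 = x0) (g : 𝓖) (hg : g ∈ H) :
    (∀ k ∈ H, A k x0 ≤ A g (A k x0)) ∨ (∀ k ∈ H, A g (A k x0) ≤ A k x0) := by
  by_cases hf : ∃ y, A g y = y
  · left
    intro k hk
    obtain ⟨y, hy⟩ := hf
    have : A (k⁻¹ * g * k) x0 = x0 := by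
      apply hx0 _ (H.mul_mem (H.mul_mem (H.inv_mem hk) hg) hk)
      refine ⟨A k⁻¹ y, ?_⟩
      rw [mul_ap, mul_ap, ap_inv, hy]
    have h2 := congrArg (A k) this
    rw [mul_ap, mul_ap, ap_inv] at h2
    exact h2.ge
  · push Not at hf
    by_contra! ⟨⟨k, _, hk⟩, ⟨l, _, hl⟩⟩
    have hc : Continuous (fun x => A g x - x) := (hA.cont g).sub continuous_id
    have := mem_range_of_exists_le_of_exists_ge hc (c := 0) ⟨A k x0, by linarith⟩ ⟨A l x0, by linarith⟩
    obtain ⟨y, hy⟩ := this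
    exact hf y (by simpa [sub_eq_zero] using hy)

lemma tr_add_aux (hA : GoodAct A) {H : Subgroup 𝓖} {x0 : ℝ} (f g : 𝓖) (hf : f ∈ H) (hg : g ∈ H)
    (hle : ∀ k ∈ H, A (g * f * k) x0 ≤ A (f * g * k) x0) : hA.tr (f * g) = hA.tr f + hA.tr g := by
  have m : ∀ g, Monotone (A g) := fun g => (hA.mono g).monotone
  have h1 : ∀ n : ℕ, ∀ k ∈ H, A (g ^ n * f * k) x0 ≤ A (f * g ^ n * k) x0 := by
    intro n
    induction n with
    | zero => intro k _; simp
    | succ n ih =>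
      intro k hk
      have e1 : g ^ (n+1) * f * k = g ^ n * (g * f * k) := by rw [pow_succ]; group
      have e2 : f * g ^ (n+1) * k = f * g ^ n * (g * k) := by rw [pow_succ]; group
      rw [e1, e2, mul_ap]
      refine (m _ (hle k hk)).trans ?_
      have := ih (g * k) (H.mul_mem hg hk)
      rw [← mul_ap]
      have e3 : g ^ n * (f * g * k) = g ^ n * f * (g * k) := by group
      rw [e3]; exact this
  have h2 : ∀ n : ℕ, ∀ k ∈ H, A ((f * g) ^ n * k) x0 ≤ A (f ^ n * g ^ n * k) x0 := by
    intro n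
    induction n with
    | zero => intro k _; simp
    | succ n ih =>
      intro k hk
      have h := ih (f * g * k) (H.mul_mem (H.mul_mem hf hg) hk)
      have h' := m (f ^ n) (h1 n (g * k) (H.mul_mem hg hk))
      rw [← mul_ap, ← mul_ap] at h'
      have e1 : (f * g) ^ (n+1) * k = (f * g) ^ n * (f * g * k) := by rw [pow_succ]; group
      have e2 : f ^ (n+1) * g ^ (n+1) * k = f ^ n * (f * g ^ n * (g * k)) := by rw [pow_succ, pow_succ]; group
      have e3 : f ^ n * g ^ n * (f * g * k) = f ^ n * (g ^ n * f * (g * k)) := by group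
      rw [e1, e2]
      rw [e3] at h
      exact h.trans h'
  have h3 : ∀ n : ℕ, A (g ^ n * f ^ n) x0 ≤ A ((f * g) ^ n) x0 := by
    intro n
    induction n with
    | zero => simp
    | succ n ih =>
      have h := m (f * g) ih
      have h' := h1 (n+1) (f ^ n) (H.pow_mem hf n)
      rw [← mul_ap, ← mul_ap] at h
      have e1 : (f * g) ^ (n+1) = f * g * (f * g) ^ n := by rw [pow_succ']
      have e2 : g ^ (n+1) * f ^ (n+1) = g ^ (n+1) * f * f ^ n := by rw [pow_succ' f]; group
      have e3 : f * g ^ (n+1) * f ^ n = f * g * (g ^ n * f ^ n) := by rw [pow_succ' g]; group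
      rw [e1, e2]
      rw [e3] at h'
      exact h'.trans h
  have hup : hA.tr (f * g) - (hA.tr f + hA.tr g) ≤ 0 := by
    apply nonpos_of_nat_mul
    intro n
    have a1 := h2 n 1 H.one_mem
    rw [mul_one, mul_one, mul_ap] at a1
    have a2 := hA.lt_tr ((f * g) ^ n) x0
    have a3 := hA.tr_lt (f ^ n) (A (g ^ n) x0)
    have a4 := hA.tr_lt (g ^ n) x0
    rw [tr_pow] at a2 a3 a4
    linarith
  have hlo : (hA.tr f + hA.tr g) - hA.tr (f * g) ≤ 0 := by
    apply nonpos_of_nat_mul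
    intro n
    have a1 := h3 n
    rw [mul_ap] at a1
    have a2 := hA.tr_lt ((f * g) ^ n) x0
    have a3 := hA.lt_tr (g ^ n) (A (f ^ n) x0)
    have a4 := hA.lt_tr (f ^ n) x0
    rw [tr_pow] at a2 a3 a4
    linarith
  linarith

lemma tr_comm (hA : GoodAct A) (f g : 𝓖) : hA.tr (f * g) = hA.tr (g * f) := by
  apply CircleDeg1Lift.translationNumber_eq_of_semiconj (f := hA.toDeg g)
  intro x
  simp only [toDeg_ap, mul_ap]

theorem tr_add (hA : GoodAct A) {H : Subgroup 𝓖} {x0 : ℝ}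
    (hx0 : ∀ g ∈ H, (∃ y, A g y = y) → A g x0 = x0) (f g : 𝓖) (hf : f ∈ H) (hg : g ∈ H) :
    hA.tr (f * g) = hA.tr f + hA.tr g := by
  have m : ∀ g, Monotone (A g) := fun g => (hA.mono g).monotone
  rcases hA.sign_const hx0 ((g * f)⁻¹ * (f * g))
    (H.mul_mem (H.inv_mem (H.mul_mem hg hf)) (H.mul_mem hf hg)) with h | h
  · apply hA.tr_add_aux f g hf hg (x0 := x0)
    intro k hk
    have := m (g * f) (h k hk)
    rw [← mul_ap, ← mul_ap, ← mul_ap] at this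
    rwa [mul_inv_cancel_left] at this
  · rw [hA.tr_comm, hA.tr_add_aux g f hg hf (x0 := x0), add_comm]
    intro k hk
    have := m (g * f) (h k hk)
    rw [← mul_ap, ← mul_ap, ← mul_ap] at this
    rwa [mul_inv_cancel_left] at this

lemma tr_zero (hA : GoodAct A) {H : Subgroup 𝓖} {x0 : ℝ}
    (hx0 : ∀ g ∈ H, (∃ y, A g y = y) → A g x0 = x0) (f : 𝓖) (hf : f ∈ H) (h : hA.tr f = 0) :
    A f x0 = x0 := by
  apply hx0 f hf
  obtain ⟨x, hx⟩ := (hA.toDeg f).exists_eq_add_translationNumber (hA.cont f)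
  refine ⟨x, ?_⟩
  have : (hA.toDeg f).translationNumber = 0 := h
  rw [this, add_zero] at hx
  exact hx

lemma tr_shift (hA : GoodAct A) (t : 𝓖) (k : ℤ) (ht : ∀ x, A t x = x + k) : hA.tr t = k :=
  CircleDeg1Lift.translationNumber_of_eq_add_int _ (x := 0) (ht 0)

end GoodAct
/-! ### Module 4 : Thurston stability -/
namespace GoodAct
open Filter Topology
variable {𝓖 : Type*} [Group 𝓖] {A : 𝓖 →* Equiv.Perm ℝ}

lemma strict (hA : GoodAct A) (g : 𝓖) (x : ℝ) : HasStrictDerivAt (A g) (deriv (A g) x) x :=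
  ((hA.c1 g).contDiffAt.hasStrictDerivAt (by norm_num))

theorem thurston (hA : GoodAct A) (S : Finset 𝓖) (hS : Subgroup.closure (S : Set 𝓖) = ⊤)
    (p : ℝ) (hp : ∀ g, A g p = p) (hhom : ∀ φ : 𝓖 → ℝ, (∀ g h, φ (g * h) = φ g + φ h) → ∀ g, φ g = 0) :
    ∀ g x, A g x = x := by
  by_contra! ⟨g0, x, hgx⟩
  have hind : ∀ P : 𝓖 → Prop, (∀ s ∈ S, P s) → P 1 → (∀ g h, P g → P h → P (g * h)) →
      (∀ g, P g → P g⁻¹) → ∀ g, P g := by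
    intro P h1 h2 h3 h4 g
    have hg : g ∈ Subgroup.closure (S : Set 𝓖) := by rw [hS]; trivial
    induction hg using Subgroup.closure_induction with
    | mem y hy => exact h1 y hy
    | one => exact h2
    | mul y z _ _ hy hz => exact h3 y z hy hz
    | inv y _ hy => exact h4 y hy
  set Z : Set ℝ := FixS A ⊤ with hZ
  have hZc : IsClosed Z := hA.isClosed_FixS ⊤
  have hxZ : x ∉ Z := fun h => hgx (h g0 trivial)
  set T := Z ∩ Set.Iic x with hT
  have hTb : BddAbove T := ⟨x, fun y hy => hy.2⟩
  have hTne : T.Nonempty := by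
    refine ⟨p + ⌊x - p⌋, hA.FixS_per (fun g _ => hp g) _, ?_⟩
    have := Int.floor_le (x - p)
    simp only [Set.mem_Iic]; linarith
  set a := sSup T with ha
  have haT : a ∈ T := (hZc.inter isClosed_Iic).csSup_mem hTne hTb
  have hax : a < x := lt_of_le_of_ne haT.2 (fun h => hxZ (h ▸ haT.1))
  have hnotZ : ∀ y, a < y → y ≤ x → y ∉ Z := fun y hy hyx hyZ =>
    absurd (le_csSup hTb ⟨hyZ, hyx⟩) (not_le.2 hy)
  have hafix : ∀ g, A g a = a := fun g => haT.1 g trivial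
  -- derivative one at a
  have hder : ∀ g, deriv (A g) a = 1 := by
    intro g
    have h0 := hhom (fun g => Real.log (deriv (A g) a)) (by
      intro g h
      have hdg : HasDerivAt (A g) (deriv (A g) a) (A h a) := by
        rw [hafix]; exact (hA.strict g a).hasDerivAt
      have hcomp := hdg.comp a (hA.strict h a).hasDerivAt
      have e : (A g) ∘ (A h) = A (g * h) := by ext y; rw [mul_ap]; rfl
      rw [e] at hcomp
      simp only [hcomp.deriv]
      rw [Real.log_mul (hA.pos _ _).ne' (hA.pos _ _).ne']) g
    have h1 := Real.exp_log (hA.pos g a)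
    rw [← h1]
    rw [h0, Real.exp_zero]
  set δ : ℝ → ℝ := fun y => ∑ s ∈ S, |A s y - y| with hδ
  have hδ0 : ∀ y, 0 ≤ δ y := fun y => Finset.sum_nonneg fun _ _ => abs_nonneg _
  have hev : ∀ᶠ y in 𝓝[>] a, 0 < δ y := by
    filter_upwards [Ioc_mem_nhdsGT hax] with y hy
    refine lt_of_le_of_ne (hδ0 y) (fun h => ?_)
    apply hnotZ y hy.1 hy.2
    have h2 := (Finset.sum_eq_zero_iff_of_nonneg (fun s _ => abs_nonneg (A s y - y))).1 h.symm
    intro g _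
    refine hind (fun g => A g y = y) ?_ (by simp) ?_ ?_ g
    · intro s hs
      have := abs_eq_zero.1 (h2 s hs)
      exact sub_eq_zero.1 this
    · intro g h hg hh
      rw [mul_ap, hh, hg]
    · intro g hg
      conv_lhs => rw [← hg]
      rw [inv_ap]
  -- key estimate
  have key : ∀ g h : 𝓖, ∀ ε > 0, ∀ᶠ y in 𝓝[>] a,
      |(A g (A h y) - A h y) - (A g y - y)| ≤ ε * |A h y - y| := by
    intro g h ε hε
    have h1 := hA.strict g a
    rw [hder] at h1
    have h2 := h1.isLittleO
    have h3 := h2.def hε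
    have ht : Tendsto (fun y => (A h y, y)) (𝓝[>] a) (𝓝 (a, a)) := by
      have : Tendsto (fun y => (A h y, y)) (𝓝 a) (𝓝 (A h a, a)) :=
        ((hA.cont h).prodMk continuous_id).tendsto a
      rw [hafix] at this
      exact this.mono_left nhdsWithin_le_nhds
    filter_upwards [ht.eventually h3] with y hy
    simp only [Real.norm_eq_abs, ContinuousLinearMap.toSpanSingleton_apply, smul_eq_mul, mul_one] at hy
    convert hy using 2
    ring
  have hbd : ∀ g : 𝓖, ∃ C : ℝ, 0 ≤ C ∧ ∀ᶠ y in 𝓝[>] a, |A g y - y| ≤ C * δ y := by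
    apply hind
    · intro s hs
      refine ⟨1, zero_le_one, Eventually.of_forall fun y => ?_⟩
      rw [one_mul]
      exact Finset.single_le_sum (f := fun s => |A s y - y|) (fun _ _ => abs_nonneg _) hs
    · exact ⟨0, le_rfl, Eventually.of_forall fun y => by simp⟩
    · rintro g h ⟨C, hC, h1⟩ ⟨D, hD, h2⟩
      refine ⟨C + 2 * D, by positivity, ?_⟩
      filter_upwards [h1, h2, key g h 1 one_pos] with y y1 y2 y3
      rw [mul_ap]
      have e : A g (A h y) - y = ((A g (A h y) - A h y) - (A g y - y)) + (A g y - y) + (A h y - y) := by ring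
      rw [e]
      have := abs_add_three ((A g (A h y) - A h y) - (A g y - y)) (A g y - y) (A h y - y)
      linarith
    · rintro g ⟨C, hC, h1⟩
      refine ⟨2 * C, by positivity, ?_⟩
      filter_upwards [h1, key g g⁻¹ (1/2) (by norm_num)] with y y1 y2
      rw [ap_inv] at y2
      have e : A g⁻¹ y - y = -((y - A g⁻¹ y - (A g y - y)) + (A g y - y)) := by ring
      have h3 := abs_add_le (y - A g⁻¹ y - (A g y - y)) (A g y - y)
      have h4 : |A g⁻¹ y - y| = |(y - A g⁻¹ y - (A g y - y)) + (A g y - y)| := by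
        rw [← abs_neg]; congr 1; ring
      linarith
  let 𝒰 : Ultrafilter ℝ := Ultrafilter.of (𝓝[>] a)
  have h𝒰 : (𝒰 : Filter ℝ) ≤ 𝓝[>] a := Ultrafilter.of_le _
  have hlim : ∀ g : 𝓖, ∃ l, Tendsto (fun y => (A g y - y) / δ y) 𝒰 (𝓝 l) := by
    intro g
    obtain ⟨C, hC, h1⟩ := hbd g
    have hmem : ∀ᶠ y in (𝒰 : Filter ℝ), (A g y - y) / δ y ∈ Set.Icc (-C) C := by
      apply h𝒰
      filter_upwards [h1, hev] with y y1 y2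
      rw [Set.mem_Icc, ← abs_le, abs_div, abs_of_pos y2, div_le_iff₀ y2]
      exact y1
    obtain ⟨l, _, hl⟩ := isCompact_Icc.ultrafilter_le_nhds (𝒰.map (fun y => (A g y - y) / δ y))
      (by rw [Ultrafilter.coe_map, le_principal_iff]; exact hmem)
    exact ⟨l, hl⟩
  choose φ hφ using hlim
  have hadd : ∀ g h, φ (g * h) = φ g + φ h := by
    intro g h
    obtain ⟨C, hC, h1⟩ := hbd h
    have t1 := (hφ (g * h)).sub ((hφ g).add (hφ h))
    have t2 : Tendsto (fun y => (A (g * h) y - y) / δ y - ((A g y - y) / δ y + (A h y - y) / δ y)) 𝒰 (𝓝 0) := by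
      refine Tendsto.mono_left ?_ h𝒰
      rw [Metric.tendsto_nhds]
      intro ε hε
      filter_upwards [h1, hev, key g h (ε / (2 * (C + 1))) (by positivity)] with y y1 y2 y3
      rw [Real.dist_eq, sub_zero, mul_ap]
      have e : (A g (A h y) - y) / δ y - ((A g y - y) / δ y + (A h y - y) / δ y) =
        (A g (A h y) - A h y - (A g y - y)) / δ y := by ring
      rw [e, abs_div, abs_of_pos y2, div_lt_iff₀ y2]
      calc _ ≤ _ := y3
        _ ≤ ε / (2 * (C + 1)) * (C * δ y) := by gcongr
        _ < ε * δ y := by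
          have : ε / (2 * (C + 1)) * (C * δ y) = (ε * δ y) * (C / (2 * (C + 1))) := by ring
          rw [this]
          apply mul_lt_of_lt_one_right (by positivity)
          rw [div_lt_one (by positivity)]; linarith
    have := tendsto_nhds_unique t1 t2
    linarith
  have hzero := hhom φ hadd
  have t1 : Tendsto (fun y => ∑ s ∈ S, |(A s y - y) / δ y|) 𝒰 (𝓝 (∑ s ∈ S, |φ s|)) :=
    tendsto_finsetSum _ fun s _ => (hφ s).abs
  have t2 : Tendsto (fun y => ∑ s ∈ S, |(A s y - y) / δ y|) 𝒰 (𝓝 1) := by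
    refine Tendsto.mono_left ?_ h𝒰
    refine tendsto_const_nhds.congr' ?_
    filter_upwards [hev] with y hy
    simp only [abs_div, abs_of_pos hy]
    rw [← Finset.sum_div, div_self hy.ne']
  have := tendsto_nhds_unique t1 t2
  simp [hzero] at this

end GoodAct
/-! ### Module 5 : cocycles on the group with the given relations -/
namespace Coc
open scoped commutatorElement

abbrev D3 {ι : Type*} (a b c : ι) : Prop := a ≠ b ∧ a ≠ c ∧ b ≠ c
abbrev D4 {ι : Type*} (a b c d : ι) : Prop := a ≠ b ∧ a ≠ c ∧ a ≠ d ∧ b ≠ c ∧ b ≠ d ∧ c ≠ d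

def EE {H : Type*} [Group H] (kq kp Y : H) : H :=
  ⁅kq, kp⁆ * ⁅kp * ⁅kq, Y⁆ * kp⁻¹, kq⁆ * ⁅kq, kp⁆⁻¹

/-- The relations between `K`, `R`, `M`. -/
structure Rels {H : Type*} [Group H] {ι : Type*} (N : ℕ) (K R : ι → ι → H) (M : ι → ι → ι → H) : Prop where
  rel1 : ∀ a b c, D3 a b c → R b c * K a b = K a b * K a c ^ N * R b c
  relA : ∀ i j k, D3 i j k → R j k * R i j = (K i j * R i k) ^ N * (K i j ^ N)⁻¹ * R i j * R j k
  relB1 : ∀ p q r s, D4 p q r s → R p s * M r q p = EE (K r q) (K r p) (R r s) * M r q p * R p s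
  relB2 : ∀ p q r s, D4 p q r s →
    M p q s * M r q p = EE (K r q) (K r p) (M r q s) * M r q p * M p q s
  relC : ∀ r q s, D3 r q s → ⁅⁅K r q, K r s⁆, R r q⁆ = (M r q s * K r q) ^ N * (K r q ^ N)⁻¹
  rel4 : ∀ p q r s, D4 p q r s → M r q s * K p r = K p r * ⁅⁅K p q, K p s⁆, K p q⁆ * M r q s
  rel5 : ∀ p q s, D3 p q s → K p q * K s q = K s q * K p q
  rel6 : ∀ p q r s, D4 p q r s → K p q * K r s = K r s * K p q
  rel7 : ∀ p q s, D3 p q s → (K q s * K p s) * K p q = K p q * (K q s * K p s)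
  rel8 : ∀ p q r, D3 p q r → M r p q * (K p r * K q r) =
    ⁅(K q p * K r p)⁻¹, ⁅(K p q * K r q)⁻¹, (K q p * K r p)⁻¹⁆⁻¹⁆ * (K p r * K q r) * M r p q

variable {H : Type*} [Group H]

def IsCoc (χ : H →* ℂˣ) (c : H → ℂ) : Prop := ∀ g h, c (g * h) = c g + χ g * c h

section
variable {χ : H →* ℂˣ} {c : H → ℂ}

lemma c_one (hc : IsCoc χ c) : c 1 = 0 := by
  have := hc 1 1
  simpa using this

lemma c_inv (hc : IsCoc χ c) (g : H) : c g⁻¹ = - ((χ g : ℂ)⁻¹ * c g) := by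
  have := hc g⁻¹ g
  rw [inv_mul_cancel, c_one hc, map_inv, Units.val_inv_eq_inv_val] at this
  linear_combination -this

lemma c_comm (hc : IsCoc χ c) (g h : H) : c ⁅g, h⁆ = (1 - χ h) * c g - (1 - χ g) * c h := by
  have h1 : (χ g : ℂ) ≠ 0 := (χ g).ne_zero
  have h2 : (χ h : ℂ) ≠ 0 := (χ h).ne_zero
  rw [commutatorElement_def, hc, hc, hc, c_inv hc, c_inv hc]
  simp only [map_mul, map_inv, Units.val_mul, Units.val_inv_eq_inv_val]
  field_simp
  ring

lemma χ_comm (g h : H) : χ ⁅g, h⁆ = 1 := by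
  rw [commutatorElement_def]; simp [map_mul, map_inv, mul_comm]

lemma c_conj (hc : IsCoc χ c) (g k : H) (hk : χ k = 1) : c (g * k * g⁻¹) = χ g * c k := by
  have h1 : (χ g : ℂ) ≠ 0 := (χ g).ne_zero
  rw [hc, hc, c_inv hc]
  simp only [map_mul, hk, mul_one]
  field_simp
  ring

lemma c_pow (hc : IsCoc χ c) (g : H) (hg : χ g = 1) (n : ℕ) : c (g ^ n) = n * c g := by
  induction n with
  | zero => simp [c_one hc]
  | succ n ih => rw [pow_succ, hc, ih, map_pow, hg]; push_cast; simp; ring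

lemma c_EE (hc : IsCoc χ c) (kq kp Y : H) (hY : χ Y = 1) :
    c (EE kq kp Y) = - ((1 - χ kq) ^ 2 * χ kp * c Y) ∧ χ (EE kq kp Y) = 1 := by
  constructor
  · rw [EE, c_conj hc _ _ (χ_comm _ _), χ_comm, c_comm hc, c_conj hc _ _ (χ_comm _ _), c_comm hc, hY]
    have : χ (kp * ⁅kq, Y⁆ * kp⁻¹) = 1 := by
      rw [map_mul, map_mul, χ_comm, map_inv]; simp
    rw [this]; simp; ring
  · rw [EE, map_mul, map_mul, χ_comm, χ_comm, map_inv, χ_comm]; simp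

end

lemma ex2 : ∀ i k : Fin 4, i ≠ k → ∃ q p, D4 p q i k := by decide
lemma ex3 : ∀ i j k : Fin 4, D3 i j k → ∃ p, D4 p i j k := by decide
lemma ex1 : ∀ i k : Fin 4, i ≠ k → ∃ j, D3 i j k := by decide

theorem coboundary {N : ℕ} (hN : N ≠ 0) {K R : Fin 4 → Fin 4 → H} {M : Fin 4 → Fin 4 → Fin 4 → H}
    (hr : Rels N K R M) {χ : H →* ℂˣ} {c : H → ℂ} (hc : IsCoc χ c)
    (hR : ∀ a b, a ≠ b → χ (R a b) = 1) (hM : ∀ a b d, D3 a b d → χ (M a b d) = 1)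
    (hgen : Subgroup.closure ({x | ∃ a b, a ≠ b ∧ x = K a b} ∪ {x | ∃ a b, a ≠ b ∧ x = R a b} ∪
      {x | ∃ a b d, D3 a b d ∧ x = M a b d}) = ⊤) :
    ∃ v : ℂ, ∀ g, c g = (1 - χ g) * v := by
  have hN' : (N : ℂ) ≠ 0 := Nat.cast_ne_zero.2 hN
  have hun : ∀ g, (χ g : ℂ) ≠ 0 := fun g => (χ g).ne_zero
  have hne : ∀ g, χ g ≠ 1 → (1 - (χ g : ℂ)) ≠ 0 := by
    intro g hg h
    apply hg
    ext
    rw [Units.val_one]; linear_combination -h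
  have cR : ∀ i k, i ≠ k → c (R i k) = 0 := by
    intro i k hik
    obtain ⟨q, p, h4⟩ := ex2 i k hik
    by_cases hα : χ (K i q) = 1
    · have h3 : D3 i q k := by grind
      have h := congrArg c (hr.relA i q k h3)
      have e1 : χ (K i q * R i k) = 1 := by rw [map_mul, hα, hR i k hik, one_mul]
      rw [hc, hc _ (R q k), hc _ (R i q), hc _ (K i q ^ N)⁻¹, c_pow hc _ e1, c_inv hc, c_pow hc _ hα, hc (K i q)] at h
      simp only [map_mul, map_pow, map_inv, hα, hR i k hik, hR q k h3.2.2, hR i q h3.1] at h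
      simp at h
      have : (N : ℂ) * c (R i k) = 0 := by linear_combination -h
      exact (mul_eq_zero.1 this).resolve_left hN'
    · have h := congrArg c (hr.relB1 p q i k h4)
      have hE := c_EE hc (K i q) (K i p) (R i k) (hR i k hik)
      have d1 : D3 i q p := by grind
      have d2 : p ≠ k := by grind
      rw [hc, hc _ (R p k), hc _ (M i q p), hE.1] at h
      simp only [map_mul, hE.2, hM i q p d1, hR p k d2] at h
      simp at h
      have : (1 - (χ (K i q) : ℂ)) ^ 2 * χ (K i p) * c (R i k) = 0 := by linear_combination h
      have h1 := hne _ hα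
      have h2 := hun (K i p)
      simpa [h1, h2] using this
  have cM : ∀ r q s, D3 r q s → c (M r q s) = 0 := by
    intro r q s h3
    by_cases hα : χ (K r q) = 1
    · have h := congrArg c (hr.relC r q s h3)
      have e1 : χ (M r q s * K r q) = 1 := by rw [map_mul, hα, hM r q s h3, one_mul]
      rw [c_comm hc, χ_comm, hR r q h3.1, hc, c_pow hc _ e1, c_inv hc, c_pow hc _ hα, hc (M r q s)] at h
      simp only [map_mul, map_pow, map_inv, hα, hM r q s h3] at h
      simp at h
      have : (N : ℂ) * c (M r q s) = 0 := by linear_combination -h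
      exact (mul_eq_zero.1 this).resolve_left hN'
    · obtain ⟨p, h4⟩ := ex3 r q s h3
      have h4' : D4 p q r s := by grind
      have h := congrArg c (hr.relB2 p q r s h4')
      have hE := c_EE hc (K r q) (K r p) (M r q s) (hM r q s h3)
      have d1 : D3 r q p := by grind
      have d2 : D3 p q s := by grind
      rw [hc, hc _ (M p q s), hc _ (M r q p), hE.1] at h
      simp only [map_mul, hE.2, hM r q p d1, hM p q s d2] at h
      simp at h
      have : (1 - (χ (K r q) : ℂ)) ^ 2 * χ (K r p) * c (M r q s) = 0 := by linear_combination h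
      have h1 := hne _ hα
      have h2 := hun (K r p)
      simpa [h1, h2] using this
  have cK : ∀ a d, a ≠ d → χ (K a d) = 1 → c (K a d) = 0 := by
    intro a d had hχ
    obtain ⟨b, h3⟩ := ex1 a d had
    have h := congrArg c (hr.rel1 a b d h3)
    rw [hc, hc _ (R b d), hc _ (K a d ^ N), c_pow hc _ hχ, cR b d h3.2.2, hR b d h3.2.2] at h
    simp at h
    tauto
  have Dtriv : ∀ a b, a ≠ b → ∀ g, χ (K a b) = 1 → c ⁅K a b, g⁆ = 0 := by
    intro a b hab g h
    rw [c_comm hc, cK a b hab h, h]; simp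
  have Dsymm : ∀ g h : H, c ⁅g, h⁆ = 0 → c ⁅h, g⁆ = 0 := by
    intro g h h1
    rw [c_comm hc] at h1 ⊢; linear_combination -h1
  have Dcomm : ∀ g h : H, g * h = h * g → c ⁅g, h⁆ = 0 := by
    intro g h h1
    rw [commutatorElement_eq_one_iff_mul_comm.2 h1, c_one hc]
  have Dtrans : ∀ g k h : H, χ k ≠ 1 → c ⁅g, k⁆ = 0 → c ⁅h, k⁆ = 0 → c ⁅g, h⁆ = 0 := by
    intro g k h hk h1 h2
    rw [c_comm hc] at h1 h2 ⊢
    have := hne _ hk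
    apply mul_left_cancel₀ this
    linear_combination (1 - (χ h : ℂ)) * h1 - (1 - (χ g : ℂ)) * h2
  have first : ∀ p q s, D3 p q s → c ⁅K p q, K p s⁆ = 0 := by
    intro p q s h3
    obtain ⟨r, h4⟩ := ex3 p q s h3
    have h4' : D4 p q r s := by grind
    have h := congrArg c (hr.rel4 p q r s h4')
    have d1 : D3 r q s := by grind
    by_cases hα : χ (K p q) = 1
    · exact Dtriv _ _ h3.1 _ hα
    rw [hc, hc _ (M r q s), hc (K p r), cM _ _ _ d1, hM _ _ _ d1, c_comm hc ⁅K p q, K p s⁆, χ_comm] at h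
    simp at h
    rcases h with h | h
    · exact absurd (sub_eq_zero.1 h).symm (by
        intro h'; exact hα (by ext; rw [h']; rfl))
    · exact h
  have second : ∀ p q s, D3 p q s → c ⁅K p q, K s q⁆ = 0 := fun p q s h3 => Dcomm _ _ (hr.rel5 p q s h3)
  have disj : ∀ p q r s, D4 p q r s → c ⁅K p q, K r s⁆ = 0 := fun p q r s h => Dcomm _ _ (hr.rel6 p q r s h)
  have chain : ∀ p q s, D3 p q s → c ⁅K p q, K q s⁆ = 0 := by
    intro p q s h3
    have h := Dcomm _ _ (hr.rel7 p q s h3)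
    have h1 := first p q s h3
    rw [c_comm hc, hc, map_mul, Units.val_mul] at h
    rw [c_comm hc] at h1 ⊢
    linear_combination -h - (χ (K q s) : ℂ) * h1
  have opp : ∀ p q, p ≠ q → c ⁅K p q, K q p⁆ = 0 := by
    intro p q hpq
    obtain ⟨r, h3⟩ := ex1 p q hpq
    have d1 : D3 p q r := by grind
    have d2 : D3 q p r := by grind
    have d3 : D3 r p q := by grind
    have d4 : D3 r q p := by grind
    have rq : r ≠ q := by grind
    have rp : r ≠ p := by grind
    by_cases h1 : χ (K r q) = 1
    swap
    · exact Dtrans _ (K r q) _ h1 (second p q r d1) (Dsymm _ _ (chain r q p d4))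
    by_cases h2 : χ (K r p) = 1
    swap
    · exact Dtrans _ (K r p) _ h2 (Dsymm _ _ (chain r p q d3)) (second q p r d2)
    by_cases hα : χ (K q p) = 1
    · exact Dsymm _ _ (Dtriv _ _ hpq.symm _ hα)
    have h := congrArg c (hr.rel8 p q r d1)
    have hcq : c (K p q * K r q) = c (K p q) := by rw [hc, cK r q rq h1]; simp
    have hcp : c (K q p * K r p) = c (K q p) := by rw [hc, cK r p rp h2]; simp
    have hχq : χ (K p q * K r q) = χ (K p q) := by rw [map_mul, h1, mul_one]
    have hχp : χ (K q p * K r p) = χ (K q p) := by rw [map_mul, h2, mul_one]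
    generalize K p q * K r q = Jq at *
    generalize K q p * K r p = Jp at *
    generalize K p r * K q r = Jr at *
    have e1 : χ ⁅Jq⁻¹, Jp⁻¹⁆⁻¹ = 1 := by rw [map_inv, χ_comm, inv_one]
    have hJp : (1 - (χ Jp : ℂ)⁻¹) ≠ 0 := by
      have := hne _ hα
      rw [hχp]
      intro h'
      apply this
      have h0 := hun (K q p)
      field_simp at h'
      linear_combination -h'
    rw [hc, hc _ (M r p q), hc _ Jr, cM _ _ _ d3, hM _ _ _ d3, c_comm hc, χ_comm, e1, c_inv hc Jp, c_inv hc ⁅Jq⁻¹, Jp⁻¹⁆, χ_comm,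
      c_comm hc, map_inv, map_inv, c_inv hc, c_inv hc] at h
    simp only [Units.val_one, Units.val_inv_eq_inv_val] at h
    rw [c_comm hc, ← hχq, ← hχp, ← hcq, ← hcp]
    have hq := hun Jq
    have hp := hun Jp
    have h' : (1 - (χ Jp : ℂ)⁻¹) * ((1 - (χ Jp : ℂ)⁻¹) * (-((χ Jq : ℂ)⁻¹ * c Jq)) -
      (1 - (χ Jq : ℂ)⁻¹) * (-((χ Jp : ℂ)⁻¹ * c Jp))) = 0 := by linear_combination -h
    have h'' := (mul_eq_zero.1 h').resolve_left hJp
    field_simp at h''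
    linear_combination h''
  have all : ∀ a b d e, a ≠ b → d ≠ e → c ⁅K a b, K d e⁆ = 0 := by
    intro a b d e hab hde
    by_cases h1 : a = d
    · subst h1
      by_cases h2 : b = e
      · subst h2; exact Dcomm _ _ rfl
      · exact first _ _ _ ⟨hab, hde, h2⟩
    by_cases h2 : b = e
    · subst h2; exact second _ _ _ ⟨hab, h1, hde.symm⟩
    by_cases h3 : b = d
    · subst h3
      by_cases h4 : a = e
      · subst h4; exact opp _ _ hab
      · exact chain _ _ _ ⟨hab, h4, hde⟩
    by_cases h4 : a = e
    · subst h4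
      exact Dsymm _ _ (chain _ _ _ ⟨hde, Ne.symm h3, hab⟩)
    · exact disj _ _ _ _ ⟨hab, h1, h4, h3, h2, hde⟩
  obtain ⟨v, hv⟩ : ∃ v : ℂ, ∀ a b, a ≠ b → c (K a b) = (1 - χ (K a b)) * v := by
    by_cases hex : ∃ a b, a ≠ b ∧ χ (K a b) ≠ 1
    · obtain ⟨a, b, hab, hχ⟩ := hex
      refine ⟨c (K a b) / (1 - χ (K a b)), fun d e hde => ?_⟩
      have h := all a b d e hab hde
      rw [c_comm hc] at h
      have := hne _ hχ
      field_simp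
      linear_combination -h
    · push Not at hex
      exact ⟨0, fun a b hab => by rw [cK a b hab (hex a b hab)]; simp⟩
  refine ⟨v, fun g => ?_⟩
  have hg : g ∈ (⊤ : Subgroup H) := trivial
  rw [← hgen] at hg
  induction hg using Subgroup.closure_induction with
  | mem y hy =>
    rcases hy with (⟨a, b, hab, rfl⟩ | ⟨a, b, hab, rfl⟩) | ⟨a, b, d, h, rfl⟩
    · exact hv a b hab
    · rw [cR a b hab, hR a b hab]; simp
    · rw [cM a b d h, hM a b d h]; simp
  | one => rw [c_one hc]; simp
  | mul y z _ _ h1 h2 => rw [hc, h1, h2, map_mul, Units.val_mul]; ring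
  | inv y _ h1 =>
    rw [c_inv hc, h1, map_inv, Units.val_inv_eq_inv_val]
    have := hun y
    field_simp; ring

end Coc
/-! ### Module 6 : transfer -/
namespace Coc

theorem hom_zero {H : Type*} [Group H] (θ : H →* ℂˣ) (n : ℕ) (hn : n ≠ 0) (hθ : ∀ g, θ g ^ n = 1)
    (hcob : ∀ j : ℕ, ∀ c : H → ℂ, IsCoc (θ ^ j) c → ∃ v : ℂ, ∀ g, c g = (1 - (θ ^ j) g) * v)
    (φ : H → ℝ) (hφ : ∀ a b, θ a = 1 → θ b = 1 → φ (a * b) = φ a + φ b) :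
    ∀ g, θ g = 1 → φ g = 0 := by
  intro g hg
  let T := θ.range
  haveI : NeZero n := ⟨hn⟩
  haveI : Finite T := by
    refine Finite.of_injective (β := rootsOfUnity n ℂ) (fun t => ⟨t.1, ?_⟩) ?_
    · obtain ⟨_, ⟨h, rfl⟩⟩ := t
      exact hθ h
    · intro a b h
      exact Subtype.ext (congrArg (fun x : rootsOfUnity n ℂ => x.1) h)
  haveI : Fintype T := Fintype.ofFinite T
  let θ' : H →* T := θ.rangeRestrict
  have hθ' : ∀ h, ((θ' h : T) : ℂˣ) = θ h := fun h => rfl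
  choose s hs using (fun ζ : T => ζ.2)
  let F : ℕ → H → T → ℂ := fun j g ζ => (((θ' g * ζ : T) : ℂˣ) : ℂ) ^ j * φ ((s (θ' g * ζ))⁻¹ * g * s ζ)
  have hcoc : ∀ j, IsCoc (θ ^ j) (fun g => ∑ ζ, F j g ζ) := by
    intro j g h
    have e1 : ∑ ζ, F j g ζ = ∑ ζ, F j g (θ' h * ζ) :=
      (Fintype.sum_equiv (Equiv.mulLeft (θ' h)) _ _ (fun ζ => rfl)).symm
    simp only [e1]
    rw [Finset.mul_sum, ← Finset.sum_add_distrib]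
    refine Finset.sum_congr rfl (fun ζ _ => ?_)
    simp only [F]
    have e2 : φ ((s (θ' (g * h) * ζ))⁻¹ * (g * h) * s ζ) =
        φ ((s (θ' g * (θ' h * ζ)))⁻¹ * g * s (θ' h * ζ)) + φ ((s (θ' h * ζ))⁻¹ * h * s ζ) := by
      rw [← hφ]
      · rw [map_mul, mul_assoc (θ' g)]; congr 1; group
      · simp only [map_mul, map_inv, hs, Subgroup.coe_mul, hθ']
        group
      · simp only [map_mul, map_inv, hs, Subgroup.coe_mul, hθ']
        group
    rw [e2, map_mul, mul_assoc (θ' g)]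
    simp only [MonoidHom.pow_apply, Subgroup.coe_mul, Units.val_mul, Units.val_pow_eq_pow_val, hθ']
    push_cast
    ring
  have hz : ∀ j, ∑ ζ, F j g ζ = 0 := by
    intro j
    obtain ⟨v, hv⟩ := hcob j _ (hcoc j)
    have := hv g
    simp only [MonoidHom.pow_apply, hg, one_pow, Units.val_one, sub_self, zero_mul] at this
    exact this
  have hg' : θ' g = 1 := Subtype.ext hg
  have hsum : ∑ j ∈ Finset.range n, ∑ ζ, F j g ζ = 0 := Finset.sum_eq_zero fun j _ => hz j
  rw [Finset.sum_comm] at hsum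
  rw [Finset.sum_eq_single (1 : T)] at hsum
  · simp only [F, hg', mul_one, Subgroup.coe_one, Units.val_one, one_pow, one_mul] at hsum
    have h1 : θ (s 1) = 1 := hs 1
    have h1' : θ (s 1)⁻¹ = 1 := by rw [map_inv, h1, inv_one]
    have e0 : φ 1 = 0 := by have := hφ 1 1 (map_one _) (map_one _); simpa using this
    have e1 : φ ((s 1)⁻¹ * g * s 1) = φ g := by
      rw [hφ _ _ (by rw [map_mul, h1', hg, one_mul]) h1, hφ _ _ h1' hg]
      have := hφ _ _ h1' h1
      rw [inv_mul_cancel, e0] at this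
      linarith
    rw [e1, Finset.sum_const, Finset.card_range, nsmul_eq_mul] at hsum
    have : (φ g : ℂ) = 0 := (mul_eq_zero.1 hsum).resolve_left (Nat.cast_ne_zero.2 hn)
    exact_mod_cast this
  · intro ζ _ hζ
    simp only [F, hg', one_mul]
    rw [← Finset.sum_mul]
    have hζn : ((ζ : ℂˣ) : ℂ) ^ n = 1 := by
      rw [← hs ζ, ← Units.val_pow_eq_pow_val, hθ]; rfl
    have hne : ((ζ : ℂˣ) : ℂ) - 1 ≠ 0 := by
      intro h
      apply hζ
      apply Subtype.ext
      apply Units.ext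
      simpa [sub_eq_zero] using h
    have := mul_geom_sum ((ζ : ℂˣ) : ℂ) n
    rw [hζn, sub_self] at this
    rw [(mul_eq_zero.1 this).resolve_left hne, zero_mul]
  · simp

end Coc
/-! ### Module 7 : automorphisms of free groups -/
namespace FA
open scoped commutatorElement
variable {α : Type*} [DecidableEq α]


/-- kill the letter `a` -/
def pi (a : α) : FreeGroup α →* FreeGroup α :=
  FreeGroup.lift (fun x => if x = a then 1 else FreeGroup.of x)

@[simp] lemma pi_self (a : α) : pi a (FreeGroup.of a) = 1 := by simp [pi]
lemma pi_of_ne {a x : α} (h : x ≠ a) : pi a (FreeGroup.of x) = FreeGroup.of x := by simp [pi, h]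

lemma pi_pi (a : α) (w : FreeGroup α) : pi a (pi a w) = pi a w := by
  have : (pi a).comp (pi a) = pi a := by
    ext x
    by_cases h : x = a
    · subst h; simp
    · simp [pi_of_ne h]
  exact DFunLike.congr_fun this w

def endo (a : α) (u w : FreeGroup α) : FreeGroup α →* FreeGroup α :=
  FreeGroup.lift (fun x => if x = a then pi a u * FreeGroup.of a * pi a w else FreeGroup.of x)

@[simp] lemma endo_self (a : α) (u w : FreeGroup α) :
    endo a u w (FreeGroup.of a) = pi a u * FreeGroup.of a * pi a w := by simp [endo]
lemma endo_of_ne {a x : α} (h : x ≠ a) (u w : FreeGroup α) :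
    endo a u w (FreeGroup.of x) = FreeGroup.of x := by simp [endo, h]

lemma endo_pi (a : α) (u w z : FreeGroup α) : endo a u w (pi a z) = pi a z := by
  have : (endo a u w).comp (pi a) = pi a := by
    ext x
    by_cases h : x = a
    · subst h; simp
    · simp [pi_of_ne h, endo_of_ne h]
  exact DFunLike.congr_fun this z

lemma endo_endo (a : α) (u w u' w' z : FreeGroup α) :
    endo a u w (endo a u' w' z) = endo a (u' * u) (w * w') z := by
  have : (endo a u w).comp (endo a u' w') = endo a (u' * u) (w * w') := by
    ext x
    by_cases h : x = a
    · subst h; simp [endo_pi]; group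
    · simp [endo_of_ne h]
  exact DFunLike.congr_fun this z

lemma endo_one (a : α) (z : FreeGroup α) : endo a 1 1 z = z := by
  have : endo a 1 1 = MonoidHom.id _ := by
    ext x
    by_cases h : x = a
    · subst h; simp
    · simp [endo_of_ne h]
  exact DFunLike.congr_fun this z

/-- `x_a ↦ u x_a w`, where occurrences of `x_a` in `u`, `w` are deleted. -/
def T (a : α) (u w : FreeGroup α) : MulAut (FreeGroup α) :=
  { toFun := endo a u w
    invFun := endo a u⁻¹ w⁻¹
    left_inv := fun z => by rw [endo_endo]; simp [endo_one]
    right_inv := fun z => by rw [endo_endo]; simp [endo_one]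
    map_mul' := map_mul _ }

lemma T_ap (a : α) (u w z : FreeGroup α) : T a u w z = endo a u w z := rfl

lemma ext_of {f g : MulAut (FreeGroup α)} (h : ∀ x, f (FreeGroup.of x) = g (FreeGroup.of x)) : f = g := by
  have : (f : FreeGroup α →* FreeGroup α) = g := FreeGroup.ext_hom _ _ h
  ext z
  exact DFunLike.congr_fun this z

@[simp] lemma T_self (a : α) (u w : FreeGroup α) :
    T a u w (FreeGroup.of a) = pi a u * FreeGroup.of a * pi a w := by rw [T_ap, endo_self]
lemma T_of_ne {a x : α} (h : x ≠ a) (u w : FreeGroup α) :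
    T a u w (FreeGroup.of x) = FreeGroup.of x := by rw [T_ap, endo_of_ne h]
lemma T_pi (a : α) (u w z : FreeGroup α) : T a u w (pi a z) = pi a z := by rw [T_ap, endo_pi]

lemma T_mul (a : α) (u w u' w' : FreeGroup α) : T a u w * T a u' w' = T a (u' * u) (w * w') := by
  ext z; rw [MulAut.mul_apply, T_ap, T_ap, T_ap, endo_endo]

lemma T_one (a : α) : T a 1 1 = (1 : MulAut (FreeGroup α)) := by
  ext z; rw [T_ap, endo_one]; rfl

lemma T_inv (a : α) (u w : FreeGroup α) : (T a u w)⁻¹ = T a u⁻¹ w⁻¹ := by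
  rw [inv_eq_iff_mul_eq_one, T_mul]; simp [T_one]

lemma T_pow (a : α) (u w : FreeGroup α) (n : ℕ) : T a u w ^ n = T a (u ^ n) (w ^ n) := by
  induction n with
  | zero => simp [T_one]
  | succ n ih => rw [pow_succ, ih, T_mul, pow_succ' u, pow_succ w]

lemma conjT (h : MulAut (FreeGroup α)) {a : α} (ha : h (FreeGroup.of a) = FreeGroup.of a)
    (hx : ∀ x, x ≠ a → pi a (h (FreeGroup.of x)) = h (FreeGroup.of x)) (u w : FreeGroup α) :
    h * T a u w = T a (h u) (h w) * h := by
  have hp : ∀ z, h (pi a z) = pi a (h z) := by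
    intro z
    have : (h : FreeGroup α →* FreeGroup α).comp (pi a) = (pi a).comp (h : FreeGroup α →* FreeGroup α) := by
      ext x
      by_cases hxa : x = a
      · subst hxa; simp [ha]
      · simp [pi_of_ne hxa, hx x hxa]
    exact DFunLike.congr_fun this z
  apply ext_of
  intro x
  rw [MulAut.mul_apply, MulAut.mul_apply]
  by_cases hxa : x = a
  · subst hxa
    rw [T_self, ha, T_self, map_mul, map_mul, ha, hp, hp]
  · rw [T_of_ne hxa, ← hx x hxa, T_pi]

/-- `x_a ↦ w⁻¹ x_a w` -/
def kh (a : α) : FreeGroup α →* MulAut (FreeGroup α) where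
  toFun w := T a w⁻¹ w
  map_one' := by simp [T_one]
  map_mul' u v := by rw [T_mul, mul_inv_rev]

/-- `x_a ↦ x_a w` -/
def rh (a : α) : FreeGroup α →* MulAut (FreeGroup α) where
  toFun w := T a 1 w
  map_one' := by simp [T_one]
  map_mul' u v := by rw [T_mul, mul_one]

lemma kh_def (a : α) (w : FreeGroup α) : kh a w = T a w⁻¹ w := rfl
lemma rh_def (a : α) (w : FreeGroup α) : rh a w = T a 1 w := rfl

lemma conjK (h : MulAut (FreeGroup α)) {a : α} (ha : h (FreeGroup.of a) = FreeGroup.of a)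
    (hx : ∀ x, x ≠ a → pi a (h (FreeGroup.of x)) = h (FreeGroup.of x)) (w : FreeGroup α) :
    h * kh a w = kh a (h w) * h := by rw [kh_def, conjT h ha hx, map_inv, kh_def]

lemma conjR (h : MulAut (FreeGroup α)) {a : α} (ha : h (FreeGroup.of a) = FreeGroup.of a)
    (hx : ∀ x, x ≠ a → pi a (h (FreeGroup.of x)) = h (FreeGroup.of x)) (w : FreeGroup α) :
    h * rh a w = rh a (h w) * h := by rw [rh_def, conjT h ha hx, map_one, rh_def]

/-- `T b` satisfies the hypotheses of `conjT` for `a ≠ b`. -/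
lemma T_ok {a b : α} (hab : a ≠ b) {u w : FreeGroup α} (hu : pi a (pi b u) = pi b u)
    (hw : pi a (pi b w) = pi b w) :
    ∀ x, x ≠ a → pi a (T b u w (FreeGroup.of x)) = T b u w (FreeGroup.of x) := by
  intro x hx
  by_cases hxb : x = b
  · subst hxb; simp [hu, hw, pi_of_ne hx]
  · simp [T_of_ne hxb, pi_of_ne hx]

lemma T_comm {a b : α} (hab : a ≠ b) {u w u' w' : FreeGroup α} (hu : pi a (pi b u) = pi b u)
    (hw : pi a (pi b w) = pi b w) (hu' : pi b (pi a u') = pi a u') (hw' : pi b (pi a w') = pi a w') :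
    T b u w * T a u' w' = T a u' w' * T b u w := by
  apply ext_of
  intro x
  rw [MulAut.mul_apply, MulAut.mul_apply]
  by_cases hxa : x = a
  · subst hxa
    rw [T_self, map_mul, map_mul, ← hu', ← hw', T_pi, T_pi, T_of_ne hab, T_self, hu', hw']
  by_cases hxb : x = b
  · subst hxb
    rw [T_of_ne hxa, T_self, map_mul, map_mul, ← hu, ← hw, T_pi, T_pi, T_of_ne hxa]
  · rw [T_of_ne hxa, T_of_ne hxb, T_of_ne hxa]

/-- simultaneous conjugation of the letters of `S` -/
def rho (S : α → Prop) [DecidablePred S] : FreeGroup α →* FreeGroup α :=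
  FreeGroup.lift (fun x => if S x then FreeGroup.of x else 1)

lemma rho_of {S : α → Prop} [DecidablePred S] {x : α} (h : S x) : rho S (FreeGroup.of x) = FreeGroup.of x := by
  simp [rho, h]
lemma rho_of_not {S : α → Prop} [DecidablePred S] {x : α} (h : ¬ S x) : rho S (FreeGroup.of x) = 1 := by
  simp [rho, h]

def jendo (S : α → Prop) [DecidablePred S] (w : FreeGroup α) : FreeGroup α →* FreeGroup α :=
  FreeGroup.lift (fun x => if S x then rho S w * FreeGroup.of x * (rho S w)⁻¹ else FreeGroup.of x)

lemma jendo_of {S : α → Prop} [DecidablePred S] {x : α} (h : S x) (w : FreeGroup α) :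
    jendo S w (FreeGroup.of x) = rho S w * FreeGroup.of x * (rho S w)⁻¹ := by simp [jendo, h]
lemma jendo_of_not {S : α → Prop} [DecidablePred S] {x : α} (h : ¬ S x) (w : FreeGroup α) :
    jendo S w (FreeGroup.of x) = FreeGroup.of x := by simp [jendo, h]

lemma jendo_rho (S : α → Prop) [DecidablePred S] (w z : FreeGroup α) :
    jendo S w (rho S z) = rho S w * rho S z * (rho S w)⁻¹ := by
  have : (jendo S w).comp (rho S) = (MulAut.conj (rho S w) : FreeGroup α →* FreeGroup α).comp (rho S) := by
    ext x
    by_cases h : S x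
    · simp [rho_of h, jendo_of h]
    · simp [rho_of_not h]
  have h := DFunLike.congr_fun this z
  simpa using h

lemma jendo_mul (S : α → Prop) [DecidablePred S] (u v z : FreeGroup α) :
    jendo S u (jendo S v z) = jendo S (u * v) z := by
  have : (jendo S u).comp (jendo S v) = jendo S (u * v) := by
    ext x
    by_cases h : S x
    · simp only [MonoidHom.comp_apply, jendo_of h, map_mul, map_inv, jendo_rho]; group
    · simp [jendo_of_not h]
  exact DFunLike.congr_fun this z

lemma jendo_one (S : α → Prop) [DecidablePred S] (z : FreeGroup α) : jendo S 1 z = z := by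
  have : jendo S 1 = MonoidHom.id _ := by
    ext x
    by_cases h : S x
    · simp [jendo_of h]
    · simp [jendo_of_not h]
  exact DFunLike.congr_fun this z

def jh (S : α → Prop) [DecidablePred S] : FreeGroup α →* MulAut (FreeGroup α) where
  toFun w :=
    { toFun := jendo S w
      invFun := jendo S w⁻¹
      left_inv := fun z => by rw [jendo_mul]; simp [jendo_one]
      right_inv := fun z => by rw [jendo_mul]; simp [jendo_one]
      map_mul' := map_mul _ }
  map_one' := by ext z; exact jendo_one S z
  map_mul' u v := by ext z; exact (jendo_mul S u v z).symm

lemma jh_ap (S : α → Prop) [DecidablePred S] (w z : FreeGroup α) : jh S w z = jendo S w z := rfl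

lemma conjJ (S : α → Prop) [DecidablePred S] (h : MulAut (FreeGroup α))
    (h1 : ∀ x, S x → rho S (h (FreeGroup.of x)) = h (FreeGroup.of x))
    (h2 : ∀ x, ¬ S x → h (FreeGroup.of x) = FreeGroup.of x) (w : FreeGroup α) :
    h * jh S w = jh S (h w) * h := by
  have hp : ∀ z, h (rho S z) = rho S (h z) := by
    intro z
    have : (h : FreeGroup α →* FreeGroup α).comp (rho S) = (rho S).comp (h : FreeGroup α →* FreeGroup α) := by
      ext x
      by_cases hx : S x
      · simp [rho_of hx, h1 x hx]
      · simp [rho_of_not hx, h2 x hx]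
    exact DFunLike.congr_fun this z
  apply ext_of
  intro x
  rw [MulAut.mul_apply, MulAut.mul_apply]
  by_cases hx : S x
  · rw [jh_ap, jh_ap, jendo_of hx, ← h1 x hx, jendo_rho, h1 x hx, map_mul, map_mul, map_inv, hp]
  · rw [jh_ap, jh_ap, jendo_of_not hx, h2 x hx, jendo_of_not hx]

end FA
/-! ### Module 7b : the relations in `Aut(F)` -/
namespace FA
open scoped commutatorElement
open FreeGroup (of)
variable {α : Type*} [DecidableEq α]

def Kk (a b : α) : MulAut (FreeGroup α) := kh a (of b)
def Rr (N : ℕ) (a b : α) : MulAut (FreeGroup α) := rh a (of b ^ N)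
def Mm (r q s : α) : MulAut (FreeGroup α) := rh r ⁅⁅of q, of s⁆, of q⁆

lemma pi_comm {a : α} (u v : FreeGroup α) : pi a ⁅u, v⁆ = ⁅pi a u, pi a v⁆ := map_commutatorElement _ _ _

lemma relB_aux {p q r : α} (h3 : Coc.D3 p q r) (w : FreeGroup α) (h1 : pi p w = w) (h2 : pi r w = w) :
    rh p w * Mm r q p = Coc.EE (Kk r q) (Kk r p) (rh r w) * Mm r q p * rh p w := by
  obtain ⟨hpq, hpr, hqr⟩ := h3
  rw [Mm, conjR (rh p w) (a := r)]
  · congr 1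
    rw [rh_def p, map_commutatorElement (T p 1 w), map_commutatorElement (T p 1 w), T_self, T_of_ne hpq.symm, map_one, one_mul, h1]
    simp only [rh_def, Coc.EE, Kk, kh_def, commutatorElement_def, T_mul, T_inv]
    generalize of q = q
    generalize of p = p
    congr 1 <;> group
  · rw [rh_def, T_of_ne hpr.symm]
  · rw [rh_def]
    exact T_ok hpr.symm (by simp) (by rw [h1, h2])

theorem rels (N : ℕ) : Coc.Rels N (Kk (α := α)) (Rr N) Mm where
  rel1 := by
    rintro a b c ⟨hab, hac, hbc⟩
    rw [Kk, Rr, conjK (rh b (of c ^ N)) (a := a)]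
    · rw [rh_def, T_self, map_one, one_mul, map_pow, pi_of_ne hbc.symm, map_mul, map_pow, Kk]
    · rw [rh_def, T_of_ne hab]
    · rw [rh_def]
      exact T_ok hab (by simp) (by simp [pi_of_ne hbc.symm, pi_of_ne hac.symm])
  relA := by
    rintro i j k ⟨hij, hik, hjk⟩
    rw [Rr, Rr, conjR (rh j (of k ^ N)) (a := i)]
    · congr 1
      rw [rh_def j, map_pow (T j 1 _), T_self, map_one, one_mul, map_pow (pi j), pi_of_ne hjk.symm]
      simp only [rh_def, Kk, Rr, kh_def, T_mul, T_inv, T_pow]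
      generalize of j = j
      generalize of k = k
      congr 1 <;> simp
    · rw [rh_def, T_of_ne hij]
    · rw [rh_def]
      exact T_ok hij (by simp) (by simp [pi_of_ne hjk.symm, pi_of_ne hik.symm])
  relB1 := by
    rintro p q r s ⟨hpq, hpr, hps, hqr, hqs, hrs⟩
    exact relB_aux ⟨hpq, hpr, hqr⟩ _ (by simp [pi_of_ne hps.symm]) (by simp [pi_of_ne hrs.symm])
  relB2 := by
    rintro p q r s ⟨hpq, hpr, hps, hqr, hqs, hrs⟩
    exact relB_aux ⟨hpq, hpr, hqr⟩ _ (by simp only [pi_comm, pi_of_ne hps.symm, pi_of_ne hpq.symm])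
      (by simp only [pi_comm, pi_of_ne hrs.symm, pi_of_ne hqr])
  relC := by
    rintro r q s ⟨hrq, hrs, hqs⟩
    simp only [Kk, Rr, Mm, kh_def, rh_def]
    generalize of q = q
    generalize of s = s
    have e : ⁅⁅q, s⁆, q⁆ * q = ⁅q, s⁆ * q * ⁅q, s⁆⁻¹ := by simp only [commutatorElement_def]; group
    have e' : ⁅⁅q, s⁆, q ^ N⁆ = (⁅⁅q, s⁆, q⁆ * q) ^ N * (q ^ N)⁻¹ := by
      rw [e, conj_pow, ← commutatorElement_def]
    have := e'
    simp only [T_mul, T_pow, T_inv]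
    rw [← e']
    simp only [commutatorElement_def, T_mul, T_inv]
    congr 1
    simp
  rel4 := by
    rintro p q r s ⟨hpq, hpr, hps, hqr, hqs, hrs⟩
    rw [Kk, Mm, conjK (rh r _) (a := p)]
    · rw [rh_def, T_self, map_one, one_mul]
      simp only [pi_comm, pi_of_ne hrs.symm, pi_of_ne hqr, map_mul, map_commutatorElement, Kk]
    · rw [rh_def, T_of_ne hpr]
    · rw [rh_def]
      refine T_ok hpr (by simp) ?_
      simp only [pi_comm, pi_of_ne hrs.symm, pi_of_ne hqr, pi_of_ne hpq.symm, pi_of_ne hps.symm]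
  rel5 := by
    rintro p q s ⟨hpq, hps, hqs⟩
    simp only [Kk, kh_def]
    apply T_comm hps.symm <;> simp [pi_of_ne hpq.symm, pi_of_ne hqs]
  rel6 := by
    rintro p q r s ⟨hpq, hpr, hps, hqr, hqs, hrs⟩
    simp only [Kk, kh_def]
    apply T_comm hpr.symm <;> simp [pi_of_ne hpq.symm, pi_of_ne hqr, pi_of_ne hps.symm, pi_of_ne hrs.symm]
  rel7 := by
    rintro p q s ⟨hpq, hps, hqs⟩
    have h := conjK (Kk q s) (a := p) (by rw [Kk, kh_def, T_of_ne hpq])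
      (by rw [Kk, kh_def]; exact T_ok hpq (by simp [pi_of_ne hqs.symm, pi_of_ne hps.symm])
            (by simp [pi_of_ne hqs.symm, pi_of_ne hps.symm])) (of s * of q)
    have e : Kk q s (of s * of q) = of q * of s := by
      rw [map_mul, Kk, kh_def, T_self, T_of_ne hqs.symm, map_inv, pi_of_ne hqs.symm]; group
    rw [e, map_mul, map_mul] at h
    change Kk q s * (Kk p s * Kk p q) = Kk p q * Kk p s * Kk q s at h
    have h2 : Kk p s * Kk q s = Kk q s * Kk p s := by
      simp only [Kk, kh_def]
      apply T_comm hpq.symm <;> simp [pi_of_ne hps.symm, pi_of_ne hqs.symm]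
    rw [mul_assoc, h, mul_assoc, h2]
  rel8 := by
    rintro p q r ⟨hpq, hpr, hqr⟩
    let S : α → Prop := fun x => x = p ∨ x = q ∨ x = r
    have hS : ∀ a b c : α, a ≠ b → a ≠ c → b ≠ c → (∀ x, S x ↔ x = a ∨ x = b ∨ x = c) →
        (Kk b a * Kk c a) = jh S (of a)⁻¹ := by
      intro a b c hab hac hbc hSx
      apply ext_of
      intro x
      have ra : rho S (of a) = of a := rho_of ((hSx a).2 (Or.inl rfl))
      rw [MulAut.mul_apply, jh_ap, Kk, Kk, kh_def, kh_def]
      by_cases hxa : x = a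
      · subst hxa
        rw [T_of_ne hac, T_of_ne hab, jendo_of ((hSx x).2 (Or.inl rfl)), map_inv, ra]; group
      by_cases hxb : x = b
      · subst hxb
        rw [T_of_ne hbc, T_self, jendo_of ((hSx x).2 (Or.inr (Or.inl rfl))), map_inv, map_inv, ra, pi_of_ne hab, inv_inv]
      by_cases hxc : x = c
      · subst hxc
        rw [T_self, map_mul, map_mul, jendo_of ((hSx x).2 (Or.inr (Or.inr rfl))), map_inv, map_inv, map_inv, ra,
          pi_of_ne hac, inv_inv, T_of_ne hbc.symm, T_of_ne hab]
      · rw [T_of_ne hxc, T_of_ne hxb, jendo_of_not]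
        rw [hSx]; tauto
    have hp := hS p q r hpq hpr hqr (fun x => Iff.rfl)
    have hq := hS q p r hpq.symm hqr hpr (fun x => by simp only [S]; tauto)
    have hr := hS r p q hpr.symm hqr.symm hpq (fun x => by simp only [S]; tauto)
    rw [hp, hq, hr, ← map_inv, ← map_inv, inv_inv, inv_inv, ← map_commutatorElement, ← map_inv,
      ← map_commutatorElement, ← map_mul]
    have em : pi r ⁅⁅of p, of q⁆, of p⁆ = ⁅⁅of p, of q⁆, of p⁆ := by
      simp only [pi_comm, pi_of_ne hpr, pi_of_ne hqr]
    have rm : rho S ⁅⁅of p, of q⁆, of p⁆ = ⁅⁅of p, of q⁆, of p⁆ := by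
      rw [map_commutatorElement, map_commutatorElement, rho_of, rho_of] <;> simp [S]
    rw [Mm, conjJ S (rh r _)]
    · congr 2
      rw [rh_def, map_inv, T_self, map_one, one_mul, em]
      simp [commutatorElement_def, mul_assoc]
    · intro x hx
      rw [rh_def]
      by_cases hxr : x = r
      · subst hxr
        rw [T_self, em, map_one, one_mul, map_mul, rm, rho_of hx]
      · rw [T_of_ne hxr, rho_of hx]
    · intro x hx
      rw [rh_def, T_of_ne]
      rintro rfl
      exact hx (by simp [S])

end FA
/-! ### Module 8a : lifts -/
namespace Lft

lemma ap_inv_self {X : Type*} (F : Equiv.Perm X) (x : X) : F ((F⁻¹ : Equiv.Perm X) x) = x := F.apply_symm_apply x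

lemma surj_of_lift {f : Equiv.Perm 𝕊} {F : ℝ → ℝ} (h : IsOPLift f F) : Function.Surjective F := by
  let G : CircleDeg1Lift := ⟨⟨F, h.2.1.monotone⟩, h.2.2.1⟩
  exact h.1.surjective G.tendsto_atTop G.tendsto_atBot

lemma deriv_pos {f : Equiv.Perm 𝕊} {F : ℝ → ℝ} (h : IsC1Lift f F) (x : ℝ) : 0 < deriv F x :=
  lt_of_le_of_ne (h.1.2.1.monotone.deriv_nonneg) (h.2.2 x).symm

lemma lift_mul {f g : Equiv.Perm 𝕊} {F G : ℝ → ℝ} (hF : IsC1Lift f F) (hG : IsC1Lift g G) :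
    IsC1Lift (f * g) (F ∘ G) := by
  refine ⟨⟨hF.1.1.comp hG.1.1, hF.1.2.1.comp hG.1.2.1, fun x => ?_, fun x => ?_⟩, hF.2.1.comp hG.2.1, fun x => ?_⟩
  · simp only [Function.comp_apply, hG.1.2.2.1, hF.1.2.2.1]
  · rw [Equiv.Perm.mul_apply, hG.1.2.2.2, hF.1.2.2.2]; rfl
  · have h1 : DifferentiableAt ℝ F (G x) := (hF.2.1.differentiable (by norm_num)) _
    have h2 : DifferentiableAt ℝ G x := (hG.2.1.differentiable (by norm_num)) _
    rw [deriv_comp x h1 h2]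
    exact mul_ne_zero (hF.2.2 _) (hG.2.2 _)

lemma lift_shift (k : ℤ) : IsC1Lift 1 (fun x => x + k) := by
  refine ⟨⟨by fun_prop, fun x y h => by simpa using h, fun x => by ring, fun x => ?_⟩, by fun_prop, fun x => ?_⟩
  · have h0 : ((k : ℝ) : 𝕊) = 0 := by rw [AddCircle.coe_eq_zero_iff]; exact ⟨k, by simp⟩
    rw [Equiv.Perm.one_apply, AddCircle.coe_add, h0, add_zero]
  · simp

lemma lift_inv {f : Equiv.Perm 𝕊} {F : Equiv.Perm ℝ} (hF : IsC1Lift f F) : IsC1Lift f⁻¹ (F⁻¹ : Equiv.Perm ℝ) := by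
  let o : ℝ ≃o ℝ := hF.1.2.1.orderIsoOfSurjective F F.surjective
  have ho : ∀ x, o x = F x := fun x => rfl
  have hos : ∀ x, o.symm x = (F⁻¹ : Equiv.Perm ℝ) x := by
    intro x
    rw [OrderIso.symm_apply_eq, ho, ap_inv_self]
  have hfun : ((F⁻¹ : Equiv.Perm ℝ) : ℝ → ℝ) = o.toHomeomorph.symm := by
    ext x; exact (hos x).symm
  have hd : ∀ x, HasDerivAt F (deriv F x) x := fun x =>
    ((hF.2.1.differentiable (by norm_num)) x).hasDerivAt
  have hc : ContDiff ℝ 1 ((F⁻¹ : Equiv.Perm ℝ) : ℝ → ℝ) := by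
    rw [hfun]
    exact o.toHomeomorph.contDiff_symm_deriv (f' := deriv F) hF.2.2 hd hF.2.1
  refine ⟨⟨hc.continuous, ?_, fun x => ?_, fun x => ?_⟩, hc, fun x => ?_⟩
  · intro x y h
    rw [← hos, ← hos]; exact o.symm.strictMono h
  · rw [Equiv.Perm.inv_eq_iff_eq, hF.1.2.2.1, ap_inv_self]
  · rw [Equiv.Perm.inv_eq_iff_eq, hF.1.2.2.2, ap_inv_self]
  · intro h0
    have h1 := (hd ((F⁻¹ : Equiv.Perm ℝ) x)).comp x ((hc.differentiable (by norm_num)) x).hasDerivAt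
    rw [h0, mul_zero] at h1
    have h2 : (F ∘ (F⁻¹ : Equiv.Perm ℝ)) = id := by ext x; simp
    rw [h2] at h1
    exact one_ne_zero ((hasDerivAt_id x).unique h1)

lemma lift_one_shift {F : ℝ → ℝ} (hF : IsC1Lift 1 F) : ∃ k : ℤ, ∀ x, F x = x + k := by
  have h : ∀ x, ∃ k : ℤ, F x - x = k := by
    intro x
    have h1 := hF.1.2.2.2 x
    rw [Equiv.Perm.one_apply, eq_comm, ← sub_eq_zero, ← AddCircle.coe_sub, AddCircle.coe_eq_zero_iff] at h1
    obtain ⟨k, hk⟩ := h1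
    exact ⟨k, by simpa using hk.symm⟩
  choose κ hκ using h
  have hcont : Continuous (fun x => F x - x) := hF.1.1.sub continuous_id
  have hκc : Continuous κ := by
    rw [Int.isClosedEmbedding_coe_real.isInducing.continuous_iff]
    refine hcont.congr (fun x => ?_)
    simp [hκ]
  refine ⟨κ 0, fun x => ?_⟩
  have := PreconnectedSpace.constant inferInstance hκc (x := x) (y := 0)
  rw [← this, ← hκ]; ring

variable {Γ : Type*} [Group Γ]

def LG (ρ : Γ →* Equiv.Perm 𝕊) : Subgroup (Γ × Equiv.Perm ℝ) where
  carrier := {t | IsC1Lift (ρ t.1) t.2}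
  one_mem' := by
    have := lift_shift 0
    simp only [Int.cast_zero, add_zero] at this
    change IsC1Lift (ρ 1) _
    rw [map_one]; exact this
  mul_mem' := by
    intro s t hs ht
    change IsC1Lift (ρ (s.1 * t.1)) _
    rw [map_mul]
    have h := lift_mul hs ht
    exact h
  inv_mem' := by
    intro s hs
    change IsC1Lift (ρ (s.1⁻¹)) _
    rw [map_inv]
    exact lift_inv hs

def LA (ρ : Γ →* Equiv.Perm 𝕊) : LG ρ →* Equiv.Perm ℝ := (MonoidHom.snd _ _).comp (LG ρ).subtype
def LP (ρ : Γ →* Equiv.Perm 𝕊) : LG ρ →* Γ := (MonoidHom.fst _ _).comp (LG ρ).subtype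

variable (ρ : Γ →* Equiv.Perm 𝕊)

lemma is_lift (t : LG ρ) : IsC1Lift (ρ (LP ρ t)) (LA ρ t) := t.2

lemma good : GoodAct (LA ρ) where
  mono g := (is_lift ρ g).1.2.1
  per g := (is_lift ρ g).1.2.2.1
  c1 g := (is_lift ρ g).2.1
  pos g := deriv_pos (is_lift ρ g)

lemma exists_lift (hρ : ∀ g, IsC1Diffeo (ρ g)) : Function.Surjective (LP ρ) := by
  intro g
  obtain ⟨F, hF⟩ := hρ g
  exact ⟨⟨(g, Equiv.ofBijective F ⟨hF.1.2.1.injective, surj_of_lift hF.1⟩), hF⟩, rfl⟩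

lemma ker_shift (t : LG ρ) (ht : LP ρ t = 1) : ∃ k : ℤ, ∀ x, LA ρ t x = x + k := by
  have := is_lift ρ t
  rw [ht, map_one] at this
  exact lift_one_shift this

lemma exists_shift (k : ℤ) : ∃ t, LP ρ t = 1 ∧ ∀ x, LA ρ t x = x + k :=
  ⟨⟨(1, Equiv.addRight (k : ℝ)), by
    change IsC1Lift (ρ 1) _
    rw [map_one]; exact lift_shift k⟩, rfl, fun x => rfl⟩

lemma triv (t : LG ρ) (ht : ∀ x, LA ρ t x = x) : ρ (LP ρ t) = 1 := by
  ext z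
  induction z using QuotientAddGroup.induction_on with
  | H x => 
    have := (is_lift ρ t).1.2.2.2 x
    rw [ht x] at this
    exact this

end Lft
/-! ### Module 8b : the core argument for one block -/
namespace Coc
open scoped commutatorElement

lemma Rels.of_inj {H H' ι : Type*} [Group H] [Group H'] {N : ℕ} {K R : ι → ι → H} {M : ι → ι → ι → H}
    (hr : Rels N K R M) {K' R' : ι → ι → H'} {M' : ι → ι → ι → H'} (f : H' →* H)
    (hf : Function.Injective f) (hK : ∀ a b, a ≠ b → f (K' a b) = K a b)
    (hR : ∀ a b, a ≠ b → f (R' a b) = R a b) (hM : ∀ a b c, D3 a b c → f (M' a b c) = M a b c) :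
    Rels N K' R' M' where
  rel1 a b c h := by
    apply hf
    simp only [map_mul, map_pow, hK a b h.1, hK a c h.2.1, hR b c h.2.2]
    exact hr.rel1 a b c h
  relA i j k h := by
    apply hf
    simp only [map_mul, map_pow, map_inv, hK i j h.1, hR i k h.2.1, hR j k h.2.2, hR i j h.1]
    exact hr.relA i j k h
  relB1 p q r s h := by
    apply hf
    have := hr.relB1 p q r s h
    obtain ⟨hpq, hpr, hps, hqr, hqs, hrs⟩ := h
    simp only [map_mul, map_inv, map_commutatorElement, EE, hK r q hqr.symm, hK r p hpr.symm, hR r s hrs,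
      hR p s hps, hM r q p ⟨hqr.symm, hpr.symm, hpq.symm⟩]
    exact this
  relB2 p q r s h := by
    apply hf
    have := hr.relB2 p q r s h
    obtain ⟨hpq, hpr, hps, hqr, hqs, hrs⟩ := h
    simp only [map_mul, map_inv, map_commutatorElement, EE, hK r q hqr.symm, hK r p hpr.symm,
      hM p q s ⟨hpq, hps, hqs⟩, hM r q s ⟨hqr.symm, hrs, hqs⟩, hM r q p ⟨hqr.symm, hpr.symm, hpq.symm⟩]
    exact this
  relC r q s h := by
    apply hf
    simp only [map_mul, map_pow, map_inv, map_commutatorElement, hK r q h.1, hK r s h.2.1, hR r q h.1, hM r q s h]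
    exact hr.relC r q s h
  rel4 p q r s h := by
    apply hf
    have := hr.rel4 p q r s h
    obtain ⟨hpq, hpr, hps, hqr, hqs, hrs⟩ := h
    simp only [map_mul, map_commutatorElement, hK p r hpr, hK p q hpq, hK p s hps, hM r q s ⟨hqr.symm, hrs, hqs⟩]
    exact this
  rel5 p q s h := by
    apply hf
    simp only [map_mul, hK p q h.1, hK s q h.2.2.symm]
    exact hr.rel5 p q s h
  rel6 p q r s h := by
    apply hf
    have := hr.rel6 p q r s h
    obtain ⟨hpq, hpr, hps, hqr, hqs, hrs⟩ := h
    simp only [map_mul, hK p q hpq, hK r s hrs]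
    exact this
  rel7 p q s h := by
    apply hf
    simp only [map_mul, hK p q h.1, hK p s h.2.1, hK q s h.2.2]
    exact hr.rel7 p q s h
  rel8 p q r h := by
    apply hf
    have := hr.rel8 p q r h
    obtain ⟨hpq, hpr, hqr⟩ := h
    simp only [map_mul, map_inv, map_commutatorElement, hK p r hpr, hK q r hqr, hK q p hpq.symm, hK r p hpr.symm,
      hK p q hpq, hK r q hqr.symm, hM r p q ⟨hpr.symm, hqr.symm, hpq⟩]
    exact this

lemma Rels.map {H H' ι : Type*} [Group H] [Group H'] {N : ℕ} {K R : ι → ι → H} {M : ι → ι → ι → H}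
    (hr : Rels N K R M) (f : H →* H') :
    Rels N (fun a b => f (K a b)) (fun a b => f (R a b)) (fun a b c => f (M a b c)) where
  rel1 a b c h := by have := congrArg f (hr.rel1 a b c h); simpa only [map_mul, map_pow] using this
  relA a b c h := by have := congrArg f (hr.relA a b c h); simpa only [map_mul, map_pow, map_inv] using this
  relB1 p q r s h := by
    have := congrArg f (hr.relB1 p q r s h)
    simpa only [EE, map_mul, map_pow, map_inv, map_commutatorElement] using this
  relB2 p q r s h := by
    have := congrArg f (hr.relB2 p q r s h)
    simpa only [EE, map_mul, map_pow, map_inv, map_commutatorElement] using this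
  relC a b c h := by
    have := congrArg f (hr.relC a b c h)
    simpa only [map_mul, map_pow, map_inv, map_commutatorElement] using this
  rel4 p q r s h := by
    have := congrArg f (hr.rel4 p q r s h); simpa only [map_mul, map_commutatorElement] using this
  rel5 p q r h := by have := congrArg f (hr.rel5 p q r h); simpa only [map_mul] using this
  rel6 p q r s h := by have := congrArg f (hr.rel6 p q r s h); simpa only [map_mul] using this
  rel7 p q r h := by have := congrArg f (hr.rel7 p q r h); simpa only [map_mul] using this
  rel8 p q r h := by
    have := congrArg f (hr.rel8 p q r h)
    simpa only [map_mul, map_pow, map_inv, map_commutatorElement] using this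

lemma Rels.reindex {H ι ι' : Type*} [Group H] {N : ℕ} {K R : ι → ι → H} {M : ι → ι → ι → H}
    (hr : Rels N K R M) (e : ι' → ι) (he : Function.Injective e) :
    Rels N (fun a b => K (e a) (e b)) (fun a b => R (e a) (e b)) (fun a b c => M (e a) (e b) (e c)) := by
  have h3 : ∀ a b c, D3 a b c → D3 (e a) (e b) (e c) := fun a b c h => ⟨he.ne h.1, he.ne h.2.1, he.ne h.2.2⟩
  have h4 : ∀ a b c d, D4 a b c d → D4 (e a) (e b) (e c) (e d) := fun a b c d h =>
    ⟨he.ne h.1, he.ne h.2.1, he.ne h.2.2.1, he.ne h.2.2.2.1, he.ne h.2.2.2.2.1, he.ne h.2.2.2.2.2⟩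
  exact
  { rel1 := fun a b c h => hr.rel1 _ _ _ (h3 a b c h)
    relA := fun a b c h => hr.relA _ _ _ (h3 a b c h)
    relB1 := fun a b c d h => hr.relB1 _ _ _ _ (h4 a b c d h)
    relB2 := fun a b c d h => hr.relB2 _ _ _ _ (h4 a b c d h)
    relC := fun a b c h => hr.relC _ _ _ (h3 a b c h)
    rel4 := fun a b c d h => hr.rel4 _ _ _ _ (h4 a b c d h)
    rel5 := fun a b c h => hr.rel5 _ _ _ (h3 a b c h)
    rel6 := fun a b c d h => hr.rel6 _ _ _ _ (h4 a b c d h)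
    rel7 := fun a b c h => hr.rel7 _ _ _ (h3 a b c h)
    rel8 := fun a b c h => hr.rel8 _ _ _ (h3 a b c h) }

end Coc
/-! ### Module 8c : the core argument for one block -/
namespace Core
open scoped commutatorElement
open Coc

variable {𝓖 H : Type*} [Group 𝓖] [Group H] {A : 𝓖 →* Equiv.Perm ℝ}

/-- `exp (2 π i t)` as a unit -/
noncomputable def e (t : ℝ) : ℂˣ := Circle.toUnits (Circle.exp (t * (2 * Real.pi)))

lemma e_add (s t : ℝ) : e (s + t) = e s * e t := by
  rw [e, e, e, add_mul, Circle.exp_add, map_mul]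

lemma e_eq_one {t : ℝ} (h : e t = 1) : ∃ k : ℤ, t = k := by
  have h1 : Circle.exp (t * (2 * Real.pi)) = Circle.exp 0 := by
    rw [Circle.exp_zero]
    apply Circle.ext
    have := congrArg (fun u : ℂˣ => (u : ℂ)) h
    simpa [e] using this
  rw [Circle.exp_eq_exp] at h1
  obtain ⟨k, hk⟩ := h1
  refine ⟨k, ?_⟩
  have hp : (2 * Real.pi) ≠ 0 := by positivity
  rw [zero_add] at hk
  exact mul_right_cancel₀ hp hk

lemma e_int (k : ℤ) : e k = 1 := by
  have h1 : Circle.exp (k * (2 * Real.pi)) = Circle.exp 0 := by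
    rw [Circle.exp_eq_exp]; exact ⟨k, by simp⟩
  rw [e, h1, Circle.exp_zero, map_one]

theorem exists_theta (hA : GoodAct A) (π : 𝓖 →* H) (hπ : Function.Surjective π)
    (hker : ∀ t, π t = 1 → ∃ k : ℤ, ∀ x, A t x = x + k)
    (hsh : ∀ k : ℤ, ∃ t, π t = 1 ∧ ∀ x, A t x = x + k)
    (x0 : ℝ) (hx0 : ∀ t, (∃ y, A t y = y) → A t x0 = x0) :
    ∃ θ : H →* ℂˣ, ∀ g, θ g = 1 → ∃ t, π t = g ∧ A t x0 = x0 := by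
  choose s hs using hπ
  have hx0' : ∀ g ∈ (⊤ : Subgroup 𝓖), (∃ y, A g y = y) → A g x0 = x0 := fun g _ => hx0 g
  have hadd : ∀ f g, hA.tr (f * g) = hA.tr f + hA.tr g := fun f g => hA.tr_add hx0' f g trivial trivial
  have htr : ∀ t u, π t = π u → e (hA.tr t) = e (hA.tr u) := by
    intro t u h
    obtain ⟨k, hk⟩ := hker (t * u⁻¹) (by rw [map_mul, map_inv, h, mul_inv_cancel])
    have h1 := hadd (t * u⁻¹) u
    rw [hA.tr_shift _ k hk, inv_mul_cancel_right] at h1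
    rw [h1, e_add, e_int, one_mul]
  refine ⟨MonoidHom.mk' (fun g => e (hA.tr (s g))) (fun g h => ?_), fun g hg => ?_⟩
  · rw [← e_add, ← hadd]
    exact htr _ _ (by rw [map_mul, hs, hs, hs])
  · obtain ⟨k, hk⟩ := e_eq_one (show e (hA.tr (s g)) = 1 from hg)
    obtain ⟨t, ht, htk⟩ := hsh (-k)
    refine ⟨t * s g, by rw [map_mul, ht, hs, one_mul], ?_⟩
    apply hA.tr_zero hx0' _ trivial
    rw [hadd, hA.tr_shift t _ htk, hk]; simp

theorem block (hA : GoodAct A) (π : 𝓖 →* H) (hπ : Function.Surjective π)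
    (hker : ∀ t, π t = 1 → ∃ k : ℤ, ∀ x, A t x = x + k)
    (hsh : ∀ k : ℤ, ∃ t, π t = 1 ∧ ∀ x, A t x = x + k)
    (x0 : ℝ) (hx0 : ∀ t, (∃ y, A t y = y) → A t x0 = x0)
    {m N : ℕ} (hm : m ≠ 0) (hN : N ≠ 0) {K R R' : Fin 4 → Fin 4 → H} {M : Fin 4 → Fin 4 → Fin 4 → H}
    (hr : Rels N K R M) (hr' : Rels m K R' M) (hRR : ∀ a b, a ≠ b → R a b = R' a b ^ m)
    (hMW : ∀ a b c, D3 a b c → ∃ u v : H, M a b c = ⁅u, v⁆) :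
    ∀ a b, a ≠ b → ∃ t, π t = R a b ∧ ∀ x, A t x = x := by
  obtain ⟨θ, hθ⟩ := exists_theta hA π hπ hker hsh x0 hx0
  have θR : ∀ a b, a ≠ b → θ (R a b) = 1 := by
    intro i k hik
    obtain ⟨j, hj⟩ := ex1 i k hik
    have h := congrArg θ (hr'.relA i j k hj)
    rw [hRR i k hik, map_pow]
    simp only [map_mul, map_pow, map_inv, mul_pow] at h
    rw [mul_right_comm (θ (K i j) ^ m), mul_inv_cancel, one_mul, mul_assoc, mul_comm (θ (R' j k)), eq_comm,
      mul_eq_right] at h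
    exact h
  have θM : ∀ a b c, D3 a b c → θ (M a b c) = 1 := by
    intro a b c h
    obtain ⟨u, v, huv⟩ := hMW a b c h
    rw [huv]; exact χ_comm u v
  have θK : ∀ a b, a ≠ b → θ (K a b) ^ m = 1 := by
    intro a c hac
    obtain ⟨b, hb⟩ := ex1 a c hac
    have h := congrArg θ (hr'.rel1 a b c hb)
    simp only [map_mul, map_pow] at h
    rw [mul_comm (θ (R' b c)), mul_left_inj, eq_comm, mul_eq_left] at h
    exact h
  let s : Set H := ({x | ∃ a b, a ≠ b ∧ x = K a b} ∪ {x | ∃ a b, a ≠ b ∧ x = R a b} ∪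
      {x | ∃ a b d, D3 a b d ∧ x = M a b d})
  let H0 := Subgroup.closure s
  have hsfin : s.Finite := by
    refine Set.Finite.union (Set.Finite.union ?_ ?_) ?_
    · exact (Set.finite_range (fun p : Fin 4 × Fin 4 => K p.1 p.2)).subset (by
        rintro _ ⟨a, b, _, rfl⟩; exact ⟨(a, b), rfl⟩)
    · exact (Set.finite_range (fun p : Fin 4 × Fin 4 => R p.1 p.2)).subset (by
        rintro _ ⟨a, b, _, rfl⟩; exact ⟨(a, b), rfl⟩)
    · exact (Set.finite_range (fun p : Fin 4 × Fin 4 × Fin 4 => M p.1 p.2.1 p.2.2)).subset (by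
        rintro _ ⟨a, b, c, _, rfl⟩; exact ⟨(a, b, c), rfl⟩)
  have mK : ∀ a b, a ≠ b → K a b ∈ H0 := fun a b h => Subgroup.subset_closure (Or.inl (Or.inl ⟨a, b, h, rfl⟩))
  have mR : ∀ a b, a ≠ b → R a b ∈ H0 := fun a b h => Subgroup.subset_closure (Or.inl (Or.inr ⟨a, b, h, rfl⟩))
  have mM : ∀ a b c, D3 a b c → M a b c ∈ H0 := fun a b c h => Subgroup.subset_closure (Or.inr ⟨a, b, c, h, rfl⟩)
  let K0 : Fin 4 → Fin 4 → H0 := fun a b => if h : a ≠ b then ⟨K a b, mK a b h⟩ else 1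
  let R0 : Fin 4 → Fin 4 → H0 := fun a b => if h : a ≠ b then ⟨R a b, mR a b h⟩ else 1
  let M0 : Fin 4 → Fin 4 → Fin 4 → H0 := fun a b c => if h : D3 a b c then ⟨M a b c, mM a b c h⟩ else 1
  have eK : ∀ a b, a ≠ b → H0.subtype (K0 a b) = K a b := fun a b h => by simp only [K0, dif_pos h]; rfl
  have eR : ∀ a b, a ≠ b → H0.subtype (R0 a b) = R a b := fun a b h => by simp only [R0, dif_pos h]; rfl
  have eM : ∀ a b c, D3 a b c → H0.subtype (M0 a b c) = M a b c := fun a b c h => by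
    simp only [M0, dif_pos h]; rfl
  have hr0 : Rels N K0 R0 M0 := hr.of_inj H0.subtype H0.subtype_injective eK eR eM
  let θ0 : H0 →* ℂˣ := θ.comp H0.subtype
  have hgen : Subgroup.closure ({x | ∃ a b, a ≠ b ∧ x = K0 a b} ∪ {x | ∃ a b, a ≠ b ∧ x = R0 a b} ∪
      {x | ∃ a b d, D3 a b d ∧ x = M0 a b d}) = ⊤ := by
    apply Subgroup.map_injective H0.subtype_injective
    rw [MonoidHom.map_closure, ← MonoidHom.range_eq_map, Subgroup.range_subtype]
    congr 1
    ext x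
    constructor
    · rintro ⟨y, (⟨a, b, h, rfl⟩ | ⟨a, b, h, rfl⟩) | ⟨a, b, c, h, rfl⟩, rfl⟩
      · exact Or.inl (Or.inl ⟨a, b, h, eK a b h⟩)
      · exact Or.inl (Or.inr ⟨a, b, h, eR a b h⟩)
      · exact Or.inr ⟨a, b, c, h, eM a b c h⟩
    · rintro ((⟨a, b, h, rfl⟩ | ⟨a, b, h, rfl⟩) | ⟨a, b, c, h, rfl⟩)
      · exact ⟨_, Or.inl (Or.inl ⟨a, b, h, rfl⟩), eK a b h⟩
      · exact ⟨_, Or.inl (Or.inr ⟨a, b, h, rfl⟩), eR a b h⟩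
      · exact ⟨_, Or.inr ⟨a, b, c, h, rfl⟩, eM a b c h⟩
  have hθm : ∀ g, θ0 g ^ m = 1 := by
    have : H0 ≤ (θ ^ m).ker := by
      rw [Subgroup.closure_le]
      rintro x ((⟨a, b, h, rfl⟩ | ⟨a, b, h, rfl⟩) | ⟨a, b, c, h, rfl⟩) <;>
        rw [SetLike.mem_coe, MonoidHom.mem_ker, MonoidHom.pow_apply]
      · exact θK a b h
      · rw [θR a b h, one_pow]
      · rw [θM a b c h, one_pow]
    intro g
    exact this g.2
  have hcob : ∀ j : ℕ, ∀ c : H0 → ℂ, IsCoc (θ0 ^ j) c → ∃ v : ℂ, ∀ g, c g = (1 - (θ0 ^ j) g) * v := by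
    intro j c hc
    refine coboundary hN hr0 hc ?_ ?_ hgen
    · intro a b h
      rw [MonoidHom.pow_apply, MonoidHom.comp_apply, eR a b h, θR a b h, one_pow]
    · intro a b d h
      rw [MonoidHom.pow_apply, MonoidHom.comp_apply, eM a b d h, θM a b d h, one_pow]
  let Λ := θ0.ker
  have hFGH : Group.FG H0 := by
    rw [Group.fg_iff_subgroup_fg]
    exact ⟨hsfin.toFinset, by simp [H0]⟩
  have hfinr : Finite θ0.range := by
    haveI : NeZero m := ⟨hm⟩
    refine Finite.of_injective (β := rootsOfUnity m ℂ) (fun t => ⟨t.1, ?_⟩) ?_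
    · obtain ⟨_, ⟨h, rfl⟩⟩ := t
      exact hθm h
    · intro a b h
      exact Subtype.ext (congrArg (fun x : rootsOfUnity m ℂ => x.1) h)
  have hfi : Λ.FiniteIndex := by
    constructor
    change θ0.ker.index ≠ 0
    rw [Subgroup.index_ker]
    exact Nat.card_pos.ne'
  have hFGΛ : Group.FG Λ := Subgroup.fg_of_index_ne_zero Λ
  have hu : ∀ g : Λ, ∃ t, π t = (g : H0) ∧ A t x0 = x0 := fun g => hθ _ g.2
  choose u hu1 hu2 using hu
  have huniq : ∀ t t', π t = π t' → A t x0 = x0 → A t' x0 = x0 → A t = A t' := by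
    intro t t' h h1 h2
    obtain ⟨k, hk⟩ := hker (t * t'⁻¹) (by rw [map_mul, map_inv, h, mul_inv_cancel])
    have h3 : A t'⁻¹ x0 = x0 := by
      conv_lhs => rw [← h2]
      exact GoodAct.inv_ap _ _
    have h4 := hk x0
    rw [GoodAct.mul_ap, h3, h1] at h4
    have h5 : (k : ℝ) = 0 := by linarith
    ext x
    have h6 := hk (A t' x)
    rw [GoodAct.mul_ap, GoodAct.inv_ap, h5, add_zero] at h6
    exact h6
  let B : Λ →* Equiv.Perm ℝ := MonoidHom.mk' (fun g => A (u g)) (fun g h => by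
    rw [← map_mul]
    apply huniq _ _ _ (hu2 _)
    · rw [GoodAct.mul_ap, hu2, hu2]
    · rw [map_mul, hu1, hu1, hu1]; rfl)
  have hB : GoodAct B :=
    ⟨fun g => hA.mono (u g), fun g => hA.per (u g), fun g => hA.c1 (u g), fun g => hA.pos (u g)⟩
  obtain ⟨S, hS⟩ := (Group.fg_def.1 hFGΛ : (⊤ : Subgroup Λ).FG)
  have hhom : ∀ φ : Λ → ℝ, (∀ g h, φ (g * h) = φ g + φ h) → ∀ g, φ g = 0 := by
    intro φ hφ g
    classical
    have := hom_zero θ0 m hm hθm hcob (fun g => if h : θ0 g = 1 then φ ⟨g, h⟩ else 0) (by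
      intro a b ha hb
      have hab : θ0 (a * b) = 1 := by rw [map_mul, ha, hb, one_mul]
      simp only [dif_pos ha, dif_pos hb, dif_pos hab]
      rw [← hφ]; rfl) g.1 g.2
    have hg : θ0 g.1 = 1 := g.2
    simp only [dif_pos hg] at this
    exact this
  have hfin := hB.thurston S hS x0 hu2 hhom
  intro a b hab
  let g : Λ := ⟨R0 a b, by
    change θ (H0.subtype (R0 a b)) = 1
    rw [eR a b hab, θR a b hab]⟩
  refine ⟨u g, ?_, hfin g⟩
  rw [hu1]
  exact eR a b hab

end Core
/-! ### Module 9 : assembly -/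
namespace Fin9
open scoped commutatorElement
open FreeGroup (of)
open FA

section
variable {α : Type*} [DecidableEq α]

/-- words in the letters of a block -/
def Lw {β : Type*} (e : β → α) : Subgroup (FreeGroup α) := Subgroup.closure (Set.range fun b => of (e b))

lemma of_mem {β : Type*} (e : β → α) (b : β) : of (e b) ∈ Lw e := Subgroup.subset_closure ⟨b, rfl⟩

lemma pi_mem {β : Type*} (e : β → α) (a : α) {w : FreeGroup α} (hw : w ∈ Lw e) : pi a w ∈ Lw e := by
  have : Lw e ≤ (Lw e).comap (pi a) := by
    conv_lhs => rw [Lw]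
    rw [Subgroup.closure_le]
    rintro _ ⟨b, rfl⟩
    change pi a (of (e b)) ∈ Lw e
    by_cases h : e b = a
    · rw [h, pi_self]; exact one_mem _
    · rw [pi_of_ne h]; exact of_mem e b
  exact this hw

lemma pi_fix {β : Type*} (e : β → α) (a : α) (ha : ∀ b, e b ≠ a) {w : FreeGroup α} (hw : w ∈ Lw e) :
    pi a w = w := by
  have : Lw e ≤ (pi a).eqLocus (MonoidHom.id _) := by
    rw [Lw, Subgroup.closure_le]
    rintro _ ⟨b, rfl⟩
    exact pi_of_ne (ha b)
  exact this hw

/-- automorphisms supported on a block -/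
def Bl {β : Type*} (e : β → α) : Subgroup (MulAut (FreeGroup α)) :=
  Subgroup.closure {f | ∃ a, ∃ u ∈ Lw e, ∃ w ∈ Lw e, f = T (e a) u w}

lemma T_mem {β : Type*} (e : β → α) (a : β) {u w : FreeGroup α} (hu : u ∈ Lw e) (hw : w ∈ Lw e) :
    T (e a) u w ∈ Bl e := Subgroup.subset_closure ⟨a, u, hu, w, hw, rfl⟩

lemma Bl_comm {β : Type*} (e e' : β → α) (h : ∀ a b, e a ≠ e' b) :
    ∀ f ∈ Bl e, ∀ g ∈ Bl e', f * g = g * f := by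
  have h1 : Bl e ≤ Subgroup.centralizer (Bl e' : Set (MulAut (FreeGroup α))) := by
    have h2 : Bl e' ≤ Subgroup.centralizer {f | ∃ a, ∃ u ∈ Lw e, ∃ w ∈ Lw e, f = T (e a) u w} := by
      rw [Bl, Subgroup.closure_le]
      rintro _ ⟨a', u', hu', w', hw', rfl⟩
      rw [SetLike.mem_coe, Subgroup.mem_centralizer_iff]
      rintro _ ⟨a, u, hu, w, hw, rfl⟩
      apply T_comm (h a a').symm
      · exact pi_fix e _ (fun b => h b a') (pi_mem e _ hu)
      · exact pi_fix e _ (fun b => h b a') (pi_mem e _ hw)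
      · exact pi_fix e' _ (fun b => (h a b).symm) (pi_mem e' _ hu')
      · exact pi_fix e' _ (fun b => (h a b).symm) (pi_mem e' _ hw')
    conv_lhs => rw [Bl]
    rw [Subgroup.closure_le]
    intro f hf
    rw [SetLike.mem_coe, Subgroup.mem_centralizer_iff]
    intro g hg
    exact (Subgroup.mem_centralizer_iff.1 (h2 hg) f hf).symm
  intro f hf g hg
  exact (Subgroup.mem_centralizer_iff.1 (h1 hf) g hg).symm

lemma Mm_eq (r q s : α) : Mm r q s = ⁅rh r ⁅of q, of s⁆, Kk r q⁆ := by
  rw [Mm, Kk]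
  simp only [rh_def, kh_def]
  rw [commutatorElement_def (T r _ _), commutatorElement_def ⁅of q, of s⁆]
  simp only [T_mul, T_inv]
  congr 1
  simp

lemma Rr_pow (m : ℕ) (a b : α) : Rr (m * m) a b = Rr m a b ^ m := by
  rw [Rr, Rr, ← map_pow, ← pow_mul]

end

variable {n : ℕ}

lemma T_IA (a : Fin n) (u w : FreeGroup (Fin n)) (h : Abelianization.of (pi a (u * w)) = 1) : T a u w ∈ IA n := by
  intro x
  have : Abelianization.of.comp (T a u w : FreeGroup (Fin n) →* FreeGroup (Fin n)) = Abelianization.of := by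
    ext y
    by_cases hy : y = a
    · subst hy
      rw [map_mul, map_mul] at h
      simp only [MonoidHom.comp_apply, MonoidHom.coe_coe, T_self, map_mul]
      rw [mul_right_comm, h, one_mul]
    · simp only [MonoidHom.comp_apply, MonoidHom.coe_coe, T_of_ne hy]
  exact DFunLike.congr_fun this x

lemma kh_IA (a : Fin n) (w : FreeGroup (Fin n)) : kh a w ∈ IA n := by
  rw [kh_def]; apply T_IA; simp

lemma rh_IA (a : Fin n) (u v : FreeGroup (Fin n)) : rh a ⁅u, v⁆ ∈ IA n := by
  rw [rh_def]; apply T_IA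
  rw [one_mul, pi_comm, map_commutatorElement, commutatorElement_eq_one_iff_mul_comm, mul_comm]

lemma Rr_not_inn {N : ℕ} (hN : N ≠ 0) {a b : Fin n} (hab : a ≠ b) : Rr N a b ∉ InnF n := by
  rintro ⟨g, hg⟩
  let ψ : FreeGroup (Fin n) →* Multiplicative ℤ := FreeGroup.lift (fun _ => Multiplicative.ofAdd 1)
  have h := congrArg (fun f : AutF n => ψ (f (of a))) hg
  have e1 : Rr N a b (of a) = of a * of b ^ N := by
    rw [Rr, rh_def, T_self, map_one, one_mul, map_pow, pi_of_ne hab.symm]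
  simp only [MulAut.conj_apply, e1, map_mul, map_inv, map_pow] at h
  rw [mul_inv_cancel_comm, left_eq_mul] at h
  have h2 : ψ (of b) = Multiplicative.ofAdd 1 := by simp [ψ]
  rw [h2, ← ofAdd_nsmul] at h
  have h3 := congrArg Multiplicative.toAdd h
  simp at h3
  exact hN h3

/-- the projection to `Out` -/
def q (n : ℕ) : AutF n →* OutF n := QuotientGroup.mk' (InnF n)

lemma q_eq_one {f : AutF n} (h : q n f = 1) : f ∈ InnF n := (QuotientGroup.eq_one_iff f).1 h

/-- block subgroup of `Γ` -/
def HB (Γ : Subgroup (OutF n)) (e : Fin 4 → Fin n) : Subgroup Γ := ((Bl e).map (q n)).subgroupOf Γ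

lemma HB_comm (Γ : Subgroup (OutF n)) (e e' : Fin 4 → Fin n) (h : ∀ a b, e a ≠ e' b) :
    ∀ f ∈ HB Γ e, ∀ g ∈ HB Γ e', f * g = g * f := by
  rintro f ⟨f', hf', hf⟩ g ⟨g', hg', hg⟩
  apply Subtype.ext
  change (f : OutF n) * g = g * f
  have hf2 : q n f' = f := hf
  have hg2 : q n g' = g := hg
  rw [← hf2, ← hg2, ← map_mul, ← map_mul, Bl_comm e e' h f' hf' g' hg']

theorem one_block (Γ : Subgroup (OutF n)) [Γ.FiniteIndex] (hT : Torelli n ≤ Γ)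
    (ρ : Γ →* Equiv.Perm 𝕊) (hρ : ∀ g : Γ, IsC1Diffeo (ρ g)) (e : Fin 4 → Fin n) (he : Function.Injective e)
    (x0 : ℝ) (hx0 : ∀ t ∈ (HB Γ e).comap (Lft.LP ρ), (∃ y, Lft.LA ρ t y = y) → Lft.LA ρ t x0 = x0) :
    ¬ Function.Injective ρ := by
  intro hinj
  set m := Γ.index.factorial with hm
  have hm0 : m ≠ 0 := Nat.factorial_ne_zero _
  have hIA : ∀ f ∈ IA n, q n f ∈ Γ := fun f hf => hT ⟨f, hf, rfl⟩
  have hRm : ∀ a b, q n (Rr m a b) ∈ Γ := by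
    intro a b
    rw [Rr, map_pow, map_pow]
    exact Subgroup.pow_mem_of_index_ne_zero_of_dvd Subgroup.FiniteIndex.index_ne_zero _
      (fun k hk hk' => Nat.dvd_factorial hk hk')
  have hRN : ∀ a b, q n (Rr (m * m) a b) ∈ Γ := by
    intro a b
    rw [Rr_pow, map_pow]; exact pow_mem (hRm a b) _
  let mkB : ∀ f : AutF n, q n f ∈ Γ → f ∈ Bl e → HB Γ e := fun f h1 h2 => ⟨⟨q n f, h1⟩, ⟨f, h2, rfl⟩⟩
  let f : HB Γ e →* OutF n := Γ.subtype.comp (HB Γ e).subtype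
  have hf : Function.Injective f := Γ.subtype_injective.comp (HB Γ e).subtype_injective
  have o := of_mem e
  have c2 : ∀ u v : FreeGroup (Fin n), u ∈ Lw e → v ∈ Lw e → ⁅u, v⁆ ∈ Lw e := by
    intro u v hu hv
    rw [commutatorElement_def]
    exact mul_mem (mul_mem (mul_mem hu hv) (inv_mem hu)) (inv_mem hv)
  let K : Fin 4 → Fin 4 → HB Γ e := fun a b => mkB (Kk (e a) (e b)) (hIA _ (kh_IA _ _))
    (T_mem e a (inv_mem (o b)) (o b))
  let R' : Fin 4 → Fin 4 → HB Γ e := fun a b => mkB (Rr m (e a) (e b)) (hRm _ _)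
    (T_mem e a (one_mem _) (pow_mem (o b) _))
  let R : Fin 4 → Fin 4 → HB Γ e := fun a b => mkB (Rr (m * m) (e a) (e b)) (hRN _ _)
    (T_mem e a (one_mem _) (pow_mem (o b) _))
  let W : Fin 4 → Fin 4 → Fin 4 → HB Γ e := fun a b c => mkB (rh (e a) ⁅of (e b), of (e c)⁆) (hIA _ (rh_IA _ _ _))
    (T_mem e a (one_mem _) (c2 _ _ (o b) (o c)))
  let M : Fin 4 → Fin 4 → Fin 4 → HB Γ e := fun a b c => mkB (Mm (e a) (e b) (e c)) (hIA _ (rh_IA _ _ _))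
    (T_mem e a (one_mem _) (c2 _ _ (c2 _ _ (o b) (o c)) (o b)))
  have hr : Coc.Rels (m * m) K R M := (((rels (m * m)).map (q n)).reindex e he).of_inj f hf
    (fun _ _ _ => rfl) (fun _ _ _ => rfl) (fun _ _ _ _ => rfl)
  have hr' : Coc.Rels m K R' M := (((rels m).map (q n)).reindex e he).of_inj f hf
    (fun _ _ _ => rfl) (fun _ _ _ => rfl) (fun _ _ _ _ => rfl)
  have hRR : ∀ a b, a ≠ b → R a b = R' a b ^ m := by
    intro a b _
    apply hf
    rw [map_pow]
    change q n (Rr (m * m) (e a) (e b)) = q n (Rr m (e a) (e b)) ^ m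
    rw [Rr_pow, map_pow]
  have hMW : ∀ a b c, Coc.D3 a b c → ∃ u v : HB Γ e, M a b c = ⁅u, v⁆ := by
    intro a b c _
    refine ⟨W a b c, K a b, ?_⟩
    apply hf
    rw [map_commutatorElement]
    change q n (Mm (e a) (e b) (e c)) = ⁅q n (rh (e a) ⁅of (e b), of (e c)⁆), q n (Kk (e a) (e b))⁆
    rw [Mm_eq, map_commutatorElement]
  let 𝓗 := (HB Γ e).comap (Lft.LP ρ)
  let A : 𝓗 →* Equiv.Perm ℝ := (Lft.LA ρ).comp 𝓗.subtype
  have hG := Lft.good ρ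
  have hA : GoodAct A := ⟨fun g => hG.mono g.1, fun g => hG.per g.1, fun g => hG.c1 g.1, fun g => hG.pos g.1⟩
  let π : 𝓗 →* HB Γ e := (Lft.LP ρ).subgroupComap (HB Γ e)
  have hπ : ∀ t, ((π t : HB Γ e) : Γ) = Lft.LP ρ t.1 := fun t => rfl
  have hsurj : Function.Surjective π := by
    intro g
    obtain ⟨t, ht⟩ := Lft.exists_lift ρ hρ g.1
    exact ⟨⟨t, by rw [Subgroup.mem_comap, ht]; exact g.2⟩, Subtype.ext ht⟩
  obtain ⟨t, ht1, ht2⟩ := Core.block hA π hsurj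
    (fun t ht => Lft.ker_shift ρ t.1 (by rw [← hπ, ht]; rfl))
    (fun k => by
      obtain ⟨t, ht, ht'⟩ := Lft.exists_shift ρ k
      exact ⟨⟨t, by rw [Subgroup.mem_comap, ht]; exact one_mem _⟩, Subtype.ext ht, ht'⟩)
    x0 (fun t ht => hx0 t.1 t.2 ht) hm0 (mul_ne_zero hm0 hm0) hr hr' hRR hMW 0 1 (by decide)
  have h1 := Lft.triv ρ t.1 ht2
  rw [← hπ, ht1] at h1
  have h2 : ((R 0 1 : HB Γ e) : Γ) = 1 := hinj (by rw [h1, map_one])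
  have h3 : q n (Rr (m * m) (e 0) (e 1)) = 1 := congrArg Subtype.val h2
  exact Rr_not_inn (mul_ne_zero hm0 hm0) (he.ne (by decide)) (q_eq_one h3)

end Fin9

/-- For `n ≥ 8`, if `Γ` is a finite index subgroup of `Out(Fₙ)`
containing the Torelli group `𝒯ₙ`, then any orientation preserving `C¹` action of `Γ`
on the circle cannot be faithful. -/
theorem out_finite_index_torelli_action_not_faithful
    (n : ℕ) (hn : 8 ≤ n)
    (Γ : Subgroup (OutF n)) [Γ.FiniteIndex] (hT : Torelli n ≤ Γ)
    (ρ : Γ →* Equiv.Perm 𝕊) (hρ : ∀ g : Γ, IsC1Diffeo (ρ g)) :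
    ¬ Function.Injective ρ := by
  have h8 : ∀ (a : Fin 4), (a : ℕ) < n := fun a => by omega
  have h8' : ∀ (a : Fin 4), (a : ℕ) + 4 < n := fun a => by omega
  let e : Fin 4 → Fin n := fun a => ⟨a, h8 a⟩
  let e' : Fin 4 → Fin n := fun a => ⟨a + 4, h8' a⟩
  have he : Function.Injective e := by
    intro a b h
    have : (a : ℕ) = b := congrArg (fun z : Fin n => (z : ℕ)) h
    exact Fin.ext this
  have he' : Function.Injective e' := by
    intro a b h
    have : (a : ℕ) + 4 = b + 4 := congrArg (fun z : Fin n => (z : ℕ)) h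
    exact Fin.ext (by omega)
  have hne : ∀ a b, e a ≠ e' b := by
    intro a b h
    have : (a : ℕ) = b + 4 := congrArg (fun z : Fin n => (z : ℕ)) h
    omega
  have hG := Lft.good ρ
  rcases hG.dyn1 ((Fin9.HB Γ e).comap (Lft.LP ρ)) ((Fin9.HB Γ e').comap (Lft.LP ρ)) (by
    intro g hg h hh
    obtain ⟨k, hk⟩ := Lft.ker_shift ρ ((g * h) * (h * g)⁻¹) (by
      rw [map_mul, map_inv, map_mul, map_mul, Fin9.HB_comm Γ e e' hne _ hg _ hh, mul_inv_cancel])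
    refine ⟨k, fun x => ?_⟩
    have := hk (Lft.LA ρ (h * g) x)
    rw [GoodAct.mul_ap, GoodAct.inv_ap, GoodAct.mul_ap, GoodAct.mul_ap] at this
    exact this) with ⟨x0, hx0⟩ | ⟨x0, hx0⟩
  · exact Fin9.one_block Γ hT ρ hρ e he x0 hx0
  · exact Fin9.one_block Γ hT ρ hρ e' he' x0 hx0
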